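/- arXiv:1510.06834 — 2 statements merged into one kernel-verified Lean document; each statement's English description precedes it below -/
import Mathlib

section
/- Let f ∈ L₁(S¹) be a 2π-periodic integrable function on the circle, let a₀ := (1/π)∫_{−π}^{π} f(φ) dφ, and let 0 < δ < π. Then there is an absolute constant c such that for every integer L ≥ 1 and every θ ∈ (−π,π], |V_L^δ(f;θ)| ≤ (c/δ)(|a₀|/L + ω(f,1/L)_{L₁(S¹)}), where ω(f,η)_{L₁(S¹)} := sup_{|φ|≤η} ∫_{−π}^{π} |f(z+φ) − f(z)| dz is the L₁ modulus of continuity of f. -/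
open MeasureTheory Real
open scoped ENNReal NNReal

/-- The Dirichlet kernel of order `L` on the circle:
`v_L(φ) = sin((L+1/2)φ)/sin(φ/2)`. -/
noncomputable def dirKerCirc (L : ℕ) (φ : ℝ) : ℝ :=
  Real.sin (((L : ℝ) + 1 / 2) * φ) / Real.sin (φ / 2)

/-- The neighbourhood `U(θ;δ) = {φ ∈ (−π,π] : cos(φ−θ) > cos δ}`. -/
def Unbhd (θ δ : ℝ) : Set ℝ :=
  {φ : ℝ | φ ∈ Set.Ioc (-Real.pi) Real.pi ∧ Real.cos (φ - θ) > Real.cos δ}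

/-- The `L`-th Fourier local convolution of `f` on the circle:
`V_L^δ(f;θ) = (1/(2π)) ∫_{[−π,π]∖U(θ;δ)} v_L(θ−φ) f(φ) dφ`. -/
noncomputable def localConvCirc (δ : ℝ) (L : ℕ) (f : ℝ → ℝ) (θ : ℝ) : ℝ :=
  (1 / (2 * Real.pi)) *
    ∫ φ in Set.Icc (-Real.pi) Real.pi \ Unbhd θ δ, dirKerCirc L (θ - φ) * f φ

/-- The `L₁` modulus of continuity on the circle:
`ω(f,η) = sup_{|φ| ≤ η} ∫_{−π}^{π} |f(z+φ) − f(z)| dz`. -/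
noncomputable def modContCirc (f : ℝ → ℝ) (η : ℝ) : ℝ :=
  ⨆ φ : {φ : ℝ // |φ| ≤ η}, ∫ z in (-Real.pi)..Real.pi, |f (z + φ.1) - f z|


lemma aux_prod_int {F w : ℝ → ℝ} (hF : ∀ a b, IntervalIntegrable F volume a b) {a b h : ℝ}
    (hab : a ≤ b) (hh : 0 ≤ h) (hw : IntervalIntegrable w volume a b) :
    IntegrableOn (Function.uncurry fun t u => w t * F (t + u))
      (Set.uIoc a b ×ˢ Set.uIoc 0 h) := by
  have h1 : Integrable ((Set.uIoc a b).indicator w) volume :=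
    (intervalIntegrable_iff.1 hw).integrable_indicator measurableSet_uIoc
  have h2 : Integrable ((Set.uIoc a (b + h)).indicator F) volume :=
    (intervalIntegrable_iff.1 (hF a (b + h))).integrable_indicator measurableSet_uIoc
  have h3 := (measurePreserving_prod_add (volume : Measure ℝ)
    (volume : Measure ℝ)).integrable_comp_of_integrable (h1.mul_prod h2)
  refine (h3.integrableOn (s := Set.uIoc a b ×ˢ Set.uIoc 0 h)).congr_fun ?_
    (measurableSet_uIoc.prod measurableSet_uIoc)
  rintro ⟨t, u⟩ ⟨ht, hu⟩
  simp only [Function.comp_apply, Function.uncurry]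
  rw [Set.indicator_of_mem ht, Set.indicator_of_mem]
  rw [Set.uIoc_of_le hab] at ht
  rw [Set.uIoc_of_le hh] at hu
  rw [Set.uIoc_of_le (by linarith)]
  simp only [Set.mem_Ioc] at *
  constructor <;> linarith

lemma aux_swap {F w : ℝ → ℝ} (hF : ∀ a b, IntervalIntegrable F volume a b) {a b h : ℝ}
    (hab : a ≤ b) (hh : 0 ≤ h) (hw : IntervalIntegrable w volume a b) :
    ∫ u in 0..h, ∫ t in a..b, w t * F (t + u) = ∫ t in a..b, w t * ∫ v in t..(t + h), F v := by
  rw [← intervalIntegral_intervalIntegral_swap (aux_prod_int hF hab hh hw)]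
  refine intervalIntegral.integral_congr fun t _ => ?_
  simp only [intervalIntegral.integral_const_mul]
  rw [intervalIntegral.integral_comp_add_left]
  simp

lemma aux_int {F w : ℝ → ℝ} (hF : ∀ a b, IntervalIntegrable F volume a b) {a b h : ℝ}
    (hab : a ≤ b) (hh : 0 ≤ h) (hw : IntervalIntegrable w volume a b) :
    IntervalIntegrable (fun u => ∫ t in a..b, w t * F (t + u)) volume 0 h := by
  have := aux_prod_int hF hab hh hw
  rw [IntegrableOn, Measure.volume_eq_prod, ← Measure.prod_restrict] at this
  have := this.integral_prod_right
  rw [intervalIntegrable_iff, IntegrableOn]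
  simpa only [intervalIntegral.integral_of_le hab, Set.uIoc_of_le hab, Function.uncurry] using this

lemma aux_parts {w q : ℝ → ℝ} {a b : ℝ} (hw : IntervalIntegrable w volume a b)
    (hq : IntervalIntegrable q volume a b) :
    ∫ t in a..b, w t * ∫ v in a..t, q v =
      (∫ t in a..b, w t) * (∫ v in a..b, q v) - ∫ t in a..b, (∫ v in a..t, w v) * q t := by
  have h1 := hw.absolutelyContinuousOnInterval_intervalIntegral (c := a) (by simp)
  have h2 := hq.absolutelyContinuousOnInterval_intervalIntegral (c := a) (by simp)
  have h := h1.integral_mul_deriv_eq_deriv_mul h2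
  have e1 : ∫ t in a..b, deriv (fun x => ∫ v in a..x, w v) t * ∫ v in a..t, q v =
      ∫ t in a..b, w t * ∫ v in a..t, q v := by
    apply intervalIntegral.integral_congr_ae
    filter_upwards [hw.ae_hasDerivAt_integral] with x hx hm
    rw [(hx (Set.uIoc_subset_uIcc hm) a (by simp)).deriv]
  have e2 : ∫ t in a..b, (∫ v in a..t, w v) * deriv (fun x => ∫ v in a..x, q v) t =
      ∫ t in a..b, (∫ v in a..t, w v) * q t := by
    apply intervalIntegral.integral_congr_ae
    filter_upwards [hq.ae_hasDerivAt_integral] with x hx hm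
    rw [(hx (Set.uIoc_subset_uIcc hm) a (by simp)).deriv]
  simp only [intervalIntegral.integral_same] at h
  rw [e1, e2] at h
  linarith

lemma aux_diff {F : ℝ → ℝ} (hF : ∀ a b, IntervalIntegrable F volume a b) (x y h : ℝ) :
    (∫ v in x..(x + h), F v) - ∫ v in y..(y + h), F v = ∫ t in y..x, (F (t + h) - F t) := by
  have hs : IntervalIntegrable (fun t => F (t + h)) volume y x := by
    simpa using (hF (y + h) (x + h)).comp_add_right h
  rw [intervalIntegral.integral_sub hs (hF _ _),
    intervalIntegral.integral_comp_add_right]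
  have a1 := intervalIntegral.integral_add_adjacent_intervals (hF y x) (hF x (x + h))
  have a2 := intervalIntegral.integral_add_adjacent_intervals (hF y (y + h)) (hF (y + h) (x + h))
  linarith

lemma aux_sub_le {G : ℝ → ℝ} (hG : ∀ a b, IntervalIntegrable G volume a b) {M : ℝ}
    (hM : ∫ t in 0..(2 * π), |G t| ≤ M) {x y : ℝ} (hx : 0 ≤ x) (hxy : x ≤ y) (hy : y ≤ 2 * π) :
    ∫ t in x..y, |G t| ≤ M :=
  (intervalIntegral.integral_mono_interval hx hxy hy
    (Filter.Eventually.of_forall fun _ => abs_nonneg _) (hG _ _).abs).trans hM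

lemma aux_Q {F : ℝ → ℝ} (hF : ∀ a b, IntervalIntegrable F volume a b)
    (hper : Function.Periodic F (2 * π)) {h M : ℝ} (hh : 0 < h)
    (hM : ∫ t in 0..(2 * π), |F (t + h) - F t| ≤ M) {x : ℝ} (hx0 : 0 ≤ x) (hx : x ≤ 2 * π) :
    |∫ v in x..(x + h), F v| ≤ h / (2 * π) * |∫ t in 0..(2 * π), F t| + M := by
  have hpi := Real.pi_pos
  have hG : ∀ a b, IntervalIntegrable (fun t => F (t + h) - F t) volume a b := fun a b => by
    refine IntervalIntegrable.sub ?_ (hF a b)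
    simpa using (hF (a + h) (b + h)).comp_add_right h
  have hd : ∀ y ∈ Set.Icc 0 (2 * π),
      |(∫ v in x..(x + h), F v) - ∫ v in y..(y + h), F v| ≤ M := by
    rintro y ⟨hy0, hy⟩
    rw [aux_diff hF]
    rcases le_total y x with hyx | hyx
    · exact (intervalIntegral.abs_integral_le_integral_abs hyx).trans
        (aux_sub_le hG hM hy0 hyx hx)
    · rw [intervalIntegral.integral_symm, abs_neg]
      exact (intervalIntegral.abs_integral_le_integral_abs hyx).trans
        (aux_sub_le hG hM hx0 hyx hy)
  have hsw := aux_swap (w := fun _ => (1 : ℝ)) hF (a := 0) (b := 2 * π) (h := h) (by positivity)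
    hh.le (by simp)
  simp only [one_mul] at hsw
  have hc : ∀ u : ℝ, ∫ t in 0..(2 * π), F (t + u) = ∫ t in 0..(2 * π), F t := fun u => by
    rw [intervalIntegral.integral_comp_add_right, add_comm (2 * π) u, zero_add,
      hper.intervalIntegral_add_eq u 0, zero_add]
  simp only [hc, intervalIntegral.integral_const, sub_zero, smul_eq_mul] at hsw
  have hQi : IntervalIntegrable (fun t => ∫ v in t..(t + h), F v) volume 0 (2 * π) := by
    have hcont : Continuous fun t => ∫ v in (0 : ℝ)..t, F v :=
      intervalIntegral.continuous_primitive hF 0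
    have : (fun t => ∫ v in t..(t + h), F v) =
        fun t => (∫ v in (0 : ℝ)..(t + h), F v) - ∫ v in (0 : ℝ)..t, F v := by
      funext t
      rw [intervalIntegral.integral_interval_sub_left (hF _ _) (hF _ _)]
    rw [this]
    exact ((hcont.comp (continuous_id.add continuous_const)).sub hcont).intervalIntegrable _ _
  have key : |∫ y in 0..(2 * π), ((∫ v in x..(x + h), F v) - ∫ v in y..(y + h), F v)|
      ≤ M * |2 * π - 0| := by
    rw [← Real.norm_eq_abs]
    refine intervalIntegral.norm_integral_le_of_norm_le_const fun y hy => ?_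
    rw [Set.uIoc_of_le (by positivity)] at hy
    exact hd y ⟨hy.1.le, hy.2⟩
  rw [intervalIntegral.integral_sub (by simp) hQi, ← hsw, sub_zero,
    abs_of_pos (show 0 < 2 * π by positivity)] at key
  simp only [intervalIntegral.integral_const, sub_zero, smul_eq_mul] at key
  set q := ∫ v in x..(x + h), F v
  set m := ∫ t in 0..(2 * π), F t
  have : |2 * π * q| ≤ M * (2 * π) + h * |m| := by
    have := abs_sub_abs_le_abs_sub (2 * π * q) (h * m)
    rw [abs_mul h, abs_of_pos hh] at this
    linarith
  rw [abs_mul, abs_of_pos (show 0 < 2 * π by positivity)] at this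
  have e : h / (2 * π) * |m| + M = (M * (2 * π) + h * |m|) / (2 * π) := by
    field_simp
    ring
  rw [e, le_div_iff₀ (by positivity)]
  linarith

lemma aux_core {F w : ℝ → ℝ} (hF : ∀ a b, IntervalIntegrable F volume a b)
    (hper : Function.Periodic F (2 * π)) {a b h M B D : ℝ} (ha : 0 ≤ a) (hab : a ≤ b)
    (hb : b ≤ 2 * π) (hh : 0 < h)
    (hM : ∀ u, 0 ≤ u → u ≤ h → ∫ t in 0..(2 * π), |F (t + u) - F t| ≤ M)
    (hw : ContinuousOn w (Set.Icc a b)) (hB : ∀ t ∈ Set.Icc a b, |w t| ≤ B)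
    (hD : ∀ t ∈ Set.Icc a b, |∫ v in a..t, w v| ≤ D) :
    h * |∫ t in a..b, w t * F t| ≤
      h * (B * M) + D * (h / (2 * π) * |∫ t in 0..(2 * π), F t| + 2 * M) := by
  have hsh : ∀ u a b, IntervalIntegrable (fun t => F (t + u)) volume a b := fun u a b => by
    simpa using (hF (a + u) (b + u)).comp_add_right u
  have hG : ∀ u a b, IntervalIntegrable (fun t => F (t + u) - F t) volume a b :=
    fun u a b => (hsh u a b).sub (hF a b)
  have hB0 : 0 ≤ B := (abs_nonneg _).trans (hB a ⟨le_rfl, hab⟩)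
  have hD0 : 0 ≤ D := (abs_nonneg _).trans (hD a ⟨le_rfl, hab⟩)
  have hw' : ContinuousOn w (Set.uIcc a b) := by rwa [Set.uIcc_of_le hab]
  have hwi : IntervalIntegrable w volume a b := hw'.intervalIntegrable
  have gen : ∀ (p : ℝ → ℝ) (P u : ℝ), 0 ≤ u → u ≤ h → 0 ≤ P → (∀ t ∈ Set.Icc a b, |p t| ≤ P) →
      |∫ t in a..b, p t * (F (t + u) - F t)| ≤ P * M := by
    intro p P u hu0 hu hP hp
    have h1 : |∫ t in a..b, p t * (F (t + u) - F t)| ≤ ∫ t in a..b, P * |F (t + u) - F t| := by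
      rw [← Real.norm_eq_abs]
      refine intervalIntegral.norm_integral_le_of_norm_le hab
        (Filter.Eventually.of_forall fun t ht => ?_) ((hG u a b).abs.const_mul P)
      rw [Real.norm_eq_abs, abs_mul]
      exact mul_le_mul_of_nonneg_right (hp t ⟨ht.1.le, ht.2⟩) (abs_nonneg _)
    refine h1.trans ?_
    rw [intervalIntegral.integral_const_mul]
    exact mul_le_mul_of_nonneg_left (aux_sub_le (hG u) (hM u hu0 hu) ha hab hb) hP
  have s1 : |∫ u in 0..h, ((∫ t in a..b, w t * F (t + u)) - ∫ t in a..b, w t * F t)|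
      ≤ (B * M) * |h - 0| := by
    rw [← Real.norm_eq_abs]
    refine intervalIntegral.norm_integral_le_of_norm_le_const fun u hu => ?_
    rw [Set.uIoc_of_le hh.le] at hu
    rw [← intervalIntegral.integral_sub ((hsh u a b).continuousOn_mul hw')
      ((hF a b).continuousOn_mul hw')]
    simp only [← mul_sub]
    exact gen w B u hu.1.le hu.2 hB0 hB
  rw [intervalIntegral.integral_sub (aux_int hF hab hh.le hwi) (by simp),
    aux_swap hF hab hh.le hwi, sub_zero, abs_of_pos hh] at s1
  simp only [intervalIntegral.integral_const, sub_zero, smul_eq_mul] at s1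
  have s2 : ∫ t in a..b, w t * ∫ v in t..(t + h), F v =
      (∫ t in a..b, w t) * (∫ v in b..(b + h), F v) -
        ∫ t in a..b, (∫ v in a..t, w v) * (F (t + h) - F t) := by
    have hp := aux_parts hwi (hG h a b)
    have e : ∀ t, ∫ v in t..(t + h), F v =
        (∫ v in a..t, (F (v + h) - F v)) + ∫ v in a..(a + h), F v := fun t => by
      have := aux_diff hF t a h
      linarith
    have e' : ∫ t in a..b, w t * ∫ v in t..(t + h), F v = ∫ t in a..b,
        (w t * (∫ v in a..t, (F (v + h) - F v)) + w t * ∫ v in a..(a + h), F v) :=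
      intervalIntegral.integral_congr fun t _ => by
        beta_reduce
        rw [e t, mul_add]
    rw [e', e b]
    rw [intervalIntegral.integral_add, hp, intervalIntegral.integral_mul_const]
    · ring
    · refine hwi.mul_continuousOn ?_
      exact (intervalIntegral.continuous_primitive (hG h) a).continuousOn
    · exact hwi.mul_const _
  have s3 : |∫ t in a..b, w t * ∫ v in t..(t + h), F v| ≤
      D * (h / (2 * π) * |∫ t in 0..(2 * π), F t| + M) + D * M := by
    rw [s2]
    refine (abs_sub _ _).trans (add_le_add ?_ (gen _ D h hh.le le_rfl hD0 hD))
    rw [abs_mul]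
    exact mul_le_mul (hD b ⟨hab, le_rfl⟩) (aux_Q hF hper hh (hM h hh.le le_rfl) (ha.trans hab) hb)
      (abs_nonneg _) hD0
  rw [abs_sub_comm] at s1
  have := abs_sub_abs_le_abs_sub (h * ∫ t in a..b, w t * F t)
    (∫ t in a..b, w t * ∫ v in t..(t + h), F v)
  rw [abs_mul h, abs_of_pos hh] at this
  linarith

lemma aux_sin {δ t : ℝ} (h0 : 0 < δ) (ht : t ∈ Set.Icc δ (2 * π - δ)) :
    δ / π ≤ Real.sin (t / 2) := by
  have hpi := Real.pi_pos
  obtain ⟨h1, h2⟩ := ht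
  rcases le_total t π with h | h
  · have := Real.mul_le_sin (x := t / 2) (by linarith) (by linarith)
    refine le_trans ?_ this
    rw [div_le_iff₀ hpi]
    field_simp
    linarith
  · have := Real.mul_le_sin (x := π - t / 2) (by linarith) (by linarith)
    rw [Real.sin_pi_sub] at this
    refine le_trans ?_ this
    rw [div_le_iff₀ hpi]
    field_simp
    linarith

lemma aux_inv {δ t : ℝ} (h0 : 0 < δ) (ht : t ∈ Set.Icc δ (2 * π - δ)) :
    (Real.sin (t / 2))⁻¹ ≤ π / δ := by
  have hpi := Real.pi_pos
  have := inv_anti₀ (by positivity) (aux_sin h0 ht)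
  rwa [inv_div] at this

lemma aux_pos {δ t : ℝ} (h0 : 0 < δ) (ht : t ∈ Set.Icc δ (2 * π - δ)) :
    0 < Real.sin (t / 2) :=
  lt_of_lt_of_le (div_pos h0 Real.pi_pos) (aux_sin h0 ht)

lemma aux_div {δ t x : ℝ} (h0 : 0 < δ) (ht : t ∈ Set.Icc δ (2 * π - δ)) (hx : |x| ≤ 1) :
    |x / Real.sin (t / 2)| ≤ π / δ := by
  rw [div_eq_mul_inv, abs_mul, abs_of_pos (inv_pos.2 (aux_pos h0 ht))]
  have := aux_inv h0 ht
  have h2 := inv_pos.2 (aux_pos h0 ht)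
  nlinarith [abs_nonneg x]

lemma aux_cont {δ : ℝ} (h0 : 0 < δ) (L : ℕ) :
    ContinuousOn (dirKerCirc L) (Set.Icc δ (2 * π - δ)) := by
  unfold dirKerCirc
  exact ContinuousOn.div (by fun_prop) (by fun_prop) fun t ht => (aux_pos h0 ht).ne'

lemma aux_D {δ : ℝ} (h0 : 0 < δ) (L : ℕ) {t : ℝ} (ht : t ∈ Set.Icc δ (2 * π - δ)) :
    |∫ v in δ..t, dirKerCirc L v| ≤ 4 * π / (((L : ℝ) + 1 / 2) * δ) := by
  have hpi := Real.pi_pos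
  set N : ℝ := (L : ℝ) + 1 / 2 with hN
  have hN0 : 0 < N := by positivity
  have hsub : Set.uIcc δ t ⊆ Set.Icc δ (2 * π - δ) := by
    rw [Set.uIcc_of_le ht.1]
    exact Set.Icc_subset_Icc le_rfl ht.2
  have hd : δ ∈ Set.Icc δ (2 * π - δ) := ⟨le_rfl, ht.1.trans ht.2⟩
  set r : ℝ → ℝ := fun v => Real.cos (N * v) / N * (Real.cos (v / 2) / 2) / Real.sin (v / 2) ^ 2
    with hr
  have hne : ∀ v ∈ Set.uIcc δ t, Real.sin (v / 2) ≠ 0 := fun v hv => (aux_pos h0 (hsub hv)).ne'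
  have hrc : ContinuousOn r (Set.uIcc δ t) :=
    ContinuousOn.div (by fun_prop) (by fun_prop) fun v hv => pow_ne_zero 2 (hne v hv)
  have hwc : ContinuousOn (dirKerCirc L) (Set.uIcc δ t) := (aux_cont h0 L).mono hsub
  have hsin : ∀ v : ℝ, HasDerivAt (fun v => Real.sin (v / 2)) (Real.cos (v / 2) * (1 / 2)) v :=
    fun v => ((hasDerivAt_id v).div_const 2).sin
  have hcos : ∀ v : ℝ, HasDerivAt (fun v => Real.cos (v / 2)) (-Real.sin (v / 2) * (1 / 2)) v :=
    fun v => ((hasDerivAt_id v).div_const 2).cos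
  have hcosN : ∀ v : ℝ, HasDerivAt (fun v => Real.cos (N * v)) (-Real.sin (N * v) * (N * 1)) v :=
    fun v => ((hasDerivAt_id v).const_mul N).cos
  have i1 := intervalIntegral.integral_eq_sub_of_hasDerivAt (a := δ) (b := t)
    (f := fun v => -(Real.cos (N * v) / Real.sin (v / 2)) / N)
    (f' := fun v => dirKerCirc L v + r v) (fun v hv => by
      have := (((hcosN v).div (hsin v) (hne v hv)).neg).div_const N
      refine this.congr_deriv ?_
      have := hne v hv
      simp only [hr, dirKerCirc, ← hN]
      field_simp
      ring) (hwc.intervalIntegrable.add hrc.intervalIntegrable)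
  rw [intervalIntegral.integral_add hwc.intervalIntegrable hrc.intervalIntegrable] at i1
  have hbc : ContinuousOn (fun v => 1 / (2 * N * Real.sin (v / 2) ^ 2)) (Set.uIcc δ t) :=
    ContinuousOn.div (by fun_prop) (by fun_prop) fun v hv =>
      mul_ne_zero (by positivity) (pow_ne_zero 2 (hne v hv))
  have i2 := intervalIntegral.integral_eq_sub_of_hasDerivAt (a := δ) (b := t)
    (f := fun v => -(Real.cos (v / 2) / Real.sin (v / 2)) / N)
    (f' := fun v => 1 / (2 * N * Real.sin (v / 2) ^ 2)) (fun v hv => by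
      have := (((hcos v).div (hsin v) (hne v hv)).neg).div_const N
      refine this.congr_deriv ?_
      have h1 := hne v hv
      have h2 := Real.sin_sq_add_cos_sq (v / 2)
      field_simp
      linarith) hbc.intervalIntegrable
  have i3 : |∫ v in δ..t, r v| ≤ ∫ v in δ..t, 1 / (2 * N * Real.sin (v / 2) ^ 2) := by
    rw [← Real.norm_eq_abs]
    refine intervalIntegral.norm_integral_le_of_norm_le ht.1
      (Filter.Eventually.of_forall fun v hv => ?_) hbc.intervalIntegrable
    have hs := aux_pos h0 (hsub (Set.uIoc_subset_uIcc (by rwa [Set.uIoc_of_le ht.1])))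
    simp only [hr, Real.norm_eq_abs]
    rw [abs_div, abs_mul, abs_div, abs_div, abs_of_pos hN0, abs_of_pos (pow_pos hs 2),
      abs_of_pos (two_pos : (0 : ℝ) < 2), ← mul_div_mul_comm, div_div, mul_comm N 2]
    gcongr
    exact mul_le_one₀ (Real.abs_cos_le_one _) (abs_nonneg _) (Real.abs_cos_le_one _)
  have b1 := abs_le.1 (aux_div h0 ht (Real.abs_cos_le_one (N * t)))
  have b2 := abs_le.1 (aux_div h0 hd (Real.abs_cos_le_one (N * δ)))
  have b3 := abs_le.1 (aux_div h0 ht (Real.abs_cos_le_one (t / 2)))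
  have b4 := abs_le.1 (aux_div h0 hd (Real.abs_cos_le_one (δ / 2)))
  rw [i2] at i3
  have i3 := abs_le.1 i3
  beta_reduce at i1 i3
  rw [← sub_div] at i1 i3
  set X := ∫ v in δ..t, dirKerCirc L v
  set Y := ∫ v in δ..t, r v
  have e : 4 * π / (N * δ) = (4 * (π / δ)) / N := by field_simp
  rw [e]
  have c1 : |X + Y| ≤ 2 * (π / δ) / N := by
    rw [i1, abs_div, abs_of_pos hN0]
    gcongr
    rw [abs_le]
    constructor <;> linarith
  have c2 : |Y| ≤ 2 * (π / δ) / N := by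
    refine (abs_le.2 i3).trans ?_
    gcongr
    linarith
  have c3 : 4 * (π / δ) / N = 2 * (π / δ) / N + 2 * (π / δ) / N := by ring
  rw [c3]
  calc |X| = |(X + Y) - Y| := by ring_nf
    _ ≤ |X + Y| + |Y| := abs_sub _ _
    _ ≤ _ := add_le_add c1 c2

lemma aux_cos {δ t : ℝ} (h0 : 0 < δ) (h1 : δ < π) (ht : t ∈ Set.Ioc 0 (2 * π)) :
    Real.cos t ≤ Real.cos δ ↔ t ∈ Set.Icc δ (2 * π - δ) := by
  rcases le_total t π with h | h
  · rw [Real.strictAntiOn_cos.le_iff_ge ⟨ht.1.le, h⟩ ⟨h0.le, h1.le⟩]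
    exact ⟨fun h' => ⟨h', by linarith⟩, fun h' => h'.1⟩
  · rw [← Real.cos_two_pi_sub t, Real.strictAntiOn_cos.le_iff_ge
      ⟨by linarith [ht.2], by linarith⟩ ⟨h0.le, h1.le⟩]
    exact ⟨fun h' => ⟨by linarith, by linarith⟩, fun h' => by linarith [h'.2]⟩

lemma aux_ker_per (L : ℕ) (x : ℝ) : dirKerCirc L (x - 2 * π) = dirKerCirc L x := by
  unfold dirKerCirc
  have e1 : ((L : ℝ) + 1 / 2) * (x - 2 * π) = ((L : ℝ) + 1 / 2) * x - π - L * (2 * π) := by ring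
  have e2 : (x - 2 * π) / 2 = x / 2 - π := by ring
  rw [e1, e2, Real.sin_sub_nat_mul_two_pi, Real.sin_sub_pi, Real.sin_sub_pi, neg_div_neg_eq]

lemma aux_ker_even (L : ℕ) (x : ℝ) : dirKerCirc L (-x) = dirKerCirc L x := by
  unfold dirKerCirc
  rw [mul_neg, neg_div, Real.sin_neg, Real.sin_neg, neg_div_neg_eq]

lemma aux_red {f : ℝ → ℝ} (hf : Function.Periodic f (2 * π)) {δ : ℝ} (h0 : 0 < δ) (h1 : δ < π)
    (L : ℕ) (θ : ℝ) :
    localConvCirc δ L f θ =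
      1 / (2 * π) * ∫ t in δ..(2 * π - δ), dirKerCirc L t * f (θ + t) := by
  have hpi := Real.pi_pos
  unfold localConvCirc
  congr 1
  set S : Set ℝ := {φ | Real.cos (φ - θ) ≤ Real.cos δ} with hS
  have hSm : MeasurableSet S := measurableSet_le (by fun_prop) (by fun_prop)
  set k : ℝ → ℝ := fun φ => dirKerCirc L (θ - φ) * f φ with hk
  have e1 : (Set.Icc (-π) π \ Unbhd θ δ : Set ℝ) =ᵐ[volume] (Set.Ioc (-π) π ∩ S : Set ℝ) := by
    have : (Set.Ioc (-π) π ∩ S : Set ℝ) = Set.Ioc (-π) π \ Unbhd θ δ := by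
      ext φ
      simp only [hS, Unbhd, Set.mem_inter_iff, Set.mem_sdiff, Set.mem_ofPred_eq, not_and, not_lt,
        gt_iff_lt]
      tauto
    rw [this]
    exact Ioc_ae_eq_Icc.symm.diff (Filter.EventuallyEq.refl _ _)
  rw [setIntegral_congr_set e1, ← setIntegral_indicator hSm]
  have hper : Function.Periodic (S.indicator k) (2 * π) := by
    intro x
    have hm : x + 2 * π ∈ S ↔ x ∈ S := by
      simp only [hS, Set.mem_ofPred_eq]
      rw [show x + 2 * π - θ = x - θ + 2 * π by ring, Real.cos_add_two_pi]
    have hkk : k (x + 2 * π) = k x := by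
      simp only [hk]
      rw [hf x, show θ - (x + 2 * π) = θ - x - 2 * π by ring, aux_ker_per]
    by_cases hx : x ∈ S
    · rw [Set.indicator_of_mem hx, Set.indicator_of_mem (hm.2 hx), hkk]
    · rw [Set.indicator_of_notMem hx, Set.indicator_of_notMem (fun h => hx (hm.1 h))]
  have e2 := hper.intervalIntegral_add_eq (-π) θ
  rw [show -π + 2 * π = π by ring] at e2
  rw [← intervalIntegral.integral_of_le (by linarith), e2]
  have e3 := intervalIntegral.integral_comp_add_left (a := 0) (b := 2 * π) (S.indicator k) θ
  rw [add_zero] at e3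
  rw [← e3, intervalIntegral.integral_of_le (by positivity),
    intervalIntegral.integral_of_le (by linarith), ← integral_Icc_eq_integral_Ioc (x := δ)]
  have e4 : (Set.Icc δ (2 * π - δ)) = Set.Ioc 0 (2 * π) ∩ Set.Icc δ (2 * π - δ) := by
    rw [eq_comm, Set.inter_eq_right]
    exact fun x hx => ⟨by linarith [hx.1], by linarith [hx.2]⟩
  rw [e4, ← setIntegral_indicator measurableSet_Icc]
  refine setIntegral_congr_fun measurableSet_Ioc fun t ht => ?_
  have hm : θ + t ∈ S ↔ t ∈ Set.Icc δ (2 * π - δ) := by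
    rw [← aux_cos h0 h1 ht]
    simp [hS]
  beta_reduce
  by_cases hx : θ + t ∈ S
  · rw [Set.indicator_of_mem hx, Set.indicator_of_mem (hm.1 hx)]
    simp only [hk]
    rw [show θ - (θ + t) = -t by ring, aux_ker_even]
  · rw [Set.indicator_of_notMem hx, Set.indicator_of_notMem (fun h => hx (hm.2 h))]

lemma aux_shift {G : ℝ → ℝ} (hG : Function.Periodic G (2 * π)) (θ : ℝ) :
    ∫ t in 0..(2 * π), G (θ + t) = ∫ t in (-π)..π, G t := by
  have e2 := hG.intervalIntegral_add_eq (-π) θ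
  rw [show -π + 2 * π = π by ring] at e2
  rw [intervalIntegral.integral_comp_add_left, e2, add_zero]

lemma aux_mod {f : ℝ → ℝ} (hf : Function.Periodic f (2 * π))
    (hi : ∀ a b, IntervalIntegrable f volume a b) {u η : ℝ} (hu : |u| ≤ η) :
    ∫ z in (-π)..π, |f (z + u) - f z| ≤ modContCirc f η := by
  have hpi := Real.pi_pos
  unfold modContCirc
  refine le_ciSup (f := fun φ : {φ : ℝ // |φ| ≤ η} => ∫ z in (-π)..π, |f (z + φ.1) - f z|)
    ?_ (⟨u, hu⟩ : {φ : ℝ // |φ| ≤ η})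
  refine ⟨(∫ z in (-π)..π, |f z|) + ∫ z in (-π)..π, |f z|, ?_⟩
  rintro _ ⟨⟨v, hv⟩, rfl⟩
  beta_reduce
  have hs : IntervalIntegrable (fun t => f (t + v)) volume (-π) π := by
    simpa using (hi (-π + v) (π + v)).comp_add_right v
  have hp : Function.Periodic (fun t => |f t|) (2 * π) := fun x => by
    beta_reduce
    rw [hf x]
  have e : ∫ z in (-π)..π, |f (z + v)| = ∫ z in (-π)..π, |f z| := by
    have e2 := hp.intervalIntegral_add_eq (-π) (-π + v)
    rw [show -π + v + 2 * π = π + v by ring, show -π + 2 * π = π by ring] at e2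
    rw [e2, ← intervalIntegral.integral_comp_add_right (fun t => |f t|)]
  calc ∫ z in (-π)..π, |f (z + v) - f z| ≤ ∫ z in (-π)..π, (|f (z + v)| + |f z|) := by
        refine intervalIntegral.integral_mono_on (by linarith) (hs.sub (hi _ _)).abs
          (hs.abs.add (hi _ _).abs) fun z _ => abs_sub _ _
    _ = _ := by rw [intervalIntegral.integral_add hs.abs (hi _ _).abs, e]

/-- Telyakovskiĭ's estimate (Lemma 1.1): for `f ∈ L₁(S¹)`, `0 < δ < π`,
`|V_L^δ(f;θ)| ≤ (c/δ)(|a₀|/L + ω(f,1/L)_{L₁})` for all `θ ∈ (−π,π]`,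
with an absolute constant `c`. -/
theorem circle_local_convolution_upper_bound :
    ∃ c : ℝ, 0 < c ∧
      ∀ f : ℝ → ℝ, Function.Periodic f (2 * Real.pi) →
        IntegrableOn f (Set.Ioc (-Real.pi) Real.pi) →
        ∀ δ : ℝ, 0 < δ → δ < Real.pi →
          ∀ L : ℕ, 1 ≤ L →
            ∀ θ ∈ Set.Ioc (-Real.pi) Real.pi,
              |localConvCirc δ L f θ| ≤
                c / δ *
                  (|(1 / Real.pi) * ∫ φ in (-Real.pi)..Real.pi, f φ| / L +
                    modContCirc f (1 / L)) := by
  have hpi := Real.pi_pos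
  refine ⟨5, by norm_num, ?_⟩
  intro f hf hfi δ h0 h1 L hL θ _
  have hL0 : (0 : ℝ) < L := by exact_mod_cast hL
  have hi : ∀ a b, IntervalIntegrable f volume a b := by
    refine hf.intervalIntegrable (by positivity) (t := -π) ?_
    rw [show -π + 2 * π = π by ring]
    rwa [intervalIntegrable_iff_integrableOn_Ioc_of_le (by linarith)]
  have hFi : ∀ a b, IntervalIntegrable (fun t => f (θ + t)) volume a b := fun a b => by
    simpa using (hi (θ + a) (θ + b)).comp_add_left θ
  have hFp : Function.Periodic (fun t => f (θ + t)) (2 * π) := fun x => by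
    beta_reduce
    rw [← add_assoc, hf]
  set M := modContCirc f (1 / L) with hMdef
  have hM : ∀ u, 0 ≤ u → u ≤ 1 / (L : ℝ) →
      ∫ t in 0..(2 * π), |f (θ + (t + u)) - f (θ + t)| ≤ M := by
    intro u hu0 hu
    have hp : Function.Periodic (fun t => |f (t + u) - f t|) (2 * π) := fun x => by
      beta_reduce
      rw [hf x, show x + 2 * π + u = x + u + 2 * π by ring, hf]
    have := aux_shift hp θ
    simp only [← add_assoc]
    rw [this]
    exact aux_mod hf hi (by rwa [abs_of_nonneg hu0])
  have hM0 : 0 ≤ M := le_trans (by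
    refine intervalIntegral.integral_nonneg (by positivity) fun t _ => abs_nonneg _)
    (hM 0 le_rfl (by positivity))
  have core := aux_core (w := dirKerCirc L) hFi hFp h0.le (show δ ≤ 2 * π - δ by linarith)
    (by linarith) (show 0 < 1 / (L : ℝ) by positivity) hM (aux_cont h0 L)
    (fun t ht => aux_div h0 ht (Real.abs_sin_le_one _)) (fun t ht => aux_D h0 L ht)
  rw [aux_shift hf θ] at core
  rw [aux_red hf h0 h1, abs_mul, abs_mul, abs_of_pos (show 0 < 1 / (2 * π) by positivity),
    abs_of_pos (show 0 < 1 / π by positivity)]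
  set I := |∫ t in δ..(2 * π - δ), dirKerCirc L t * f (θ + t)|
  set A := |∫ φ in (-π)..π, f φ|
  have hA : 0 ≤ A := abs_nonneg _
  have hD : 4 * π / (((L : ℝ) + 1 / 2) * δ) ≤ 4 * π / (L * δ) := by
    gcongr
    linarith
  have hX : 0 ≤ 1 / (L : ℝ) / (2 * π) * A + 2 * M := by positivity
  have core2 := core.trans (add_le_add le_rfl (mul_le_mul_of_nonneg_right hD hX))
  have e : 1 / (L : ℝ) * (π / δ * M) + 4 * π / (L * δ) * (1 / (L : ℝ) / (2 * π) * A + 2 * M) =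
      1 / (L : ℝ) * (2 * π * ((1 / δ) * (1 / π * A / L + (9 / 2) * M))) := by
    field_simp
    ring
  rw [e] at core2
  have core3 := le_of_mul_le_mul_left core2 (by positivity)
  rw [one_div, inv_mul_le_iff₀ (by positivity)]
  refine core3.trans ?_
  have hA' : 0 ≤ 1 / π * A / L := by positivity
  rw [show 5 / δ * (1 / π * A / L + M) = 1 / δ * (5 * (1 / π * A / L + M)) by ring]
  gcongr
  linarith
end

section
/- For all real α,β > −1 there exist constants c > 0 and C > 0 depending only on α and β such that for every integer ℓ ≥ 1 and every θ with c/ℓ ≤ θ ≤ π − c/ℓ, |P_ℓ^{(α,β)}(cos θ) − ℓ̃^{−1/2} m_{α,β}(θ) cos ω_α(ℓ̃ θ)| ≤ C ℓ̃^{−1/2} m_{α,β}(θ) (sin θ)^{−1} ℓ^{−1}, where ℓ̃ := ℓ + (α+β+1)/2. -/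
open MeasureTheory Real
open scoped ENNReal NNReal

/-- The classical Jacobi polynomial `P_n^{(a,b)}` (hypergeometric representation,
normalised so that `P_n^{(a,b)}(1) = Γ(n+a+1)/(Γ(n+1)Γ(a+1))`). -/
noncomputable def jacobiP (a b : ℝ) (n : ℕ) (x : ℝ) : ℝ :=
  ∑ s ∈ Finset.range (n + 1),
    (Real.Gamma ((n : ℝ) + a + 1) /
        (Real.Gamma ((s : ℝ) + a + 1) * (Nat.factorial (n - s) : ℝ))) *
      (Real.Gamma ((n : ℝ) + b + 1) /
        (Real.Gamma ((n : ℝ) - (s : ℝ) + b + 1) * (Nat.factorial s : ℝ))) *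
      ((x - 1) / 2) ^ s * ((x + 1) / 2) ^ (n - s)

/-- `M_ℓ^{(a,b)}`, the `L₂(w_{a,b})` normalisation constant of `P_ℓ^{(a,b)}`. -/
noncomputable def jacobiM (a b : ℝ) (ℓ : ℕ) : ℝ :=
  (2 : ℝ) ^ (a + b + 1) / (2 * (ℓ : ℝ) + a + b + 1) *
    (Real.Gamma ((ℓ : ℝ) + a + 1) * Real.Gamma ((ℓ : ℝ) + b + 1)) /
    (Real.Gamma ((ℓ : ℝ) + 1) * Real.Gamma ((ℓ : ℝ) + a + b + 1))

/-- The generalised Dirichlet kernel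
`v_L^{(a,b)}(t,s) = Σ_{ℓ=0}^{L} (M_ℓ^{(a,b)})⁻¹ P_ℓ^{(a,b)}(t) P_ℓ^{(a,b)}(s)`. -/
noncomputable def dirichletJ (a b : ℝ) (L : ℕ) (t s : ℝ) : ℝ :=
  ∑ ℓ ∈ Finset.range (L + 1), (jacobiM a b ℓ)⁻¹ * jacobiP a b ℓ t * jacobiP a b ℓ s

/-- The filtered Jacobi kernel
`v_{L,g}^{(a,b)}(t,s) = Σ_{ℓ=0}^{2L−1} g(ℓ/L) (M_ℓ^{(a,b)})⁻¹ P_ℓ^{(a,b)}(t) P_ℓ^{(a,b)}(s)`. -/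
noncomputable def filteredJ (a b : ℝ) (g : ℝ → ℝ) (L : ℕ) (t s : ℝ) : ℝ :=
  ∑ ℓ ∈ Finset.range (2 * L),
    g ((ℓ : ℝ) / (L : ℝ)) * (jacobiM a b ℓ)⁻¹ * jacobiP a b ℓ t * jacobiP a b ℓ s

/-- `Z(d,ℓ)`, the dimension of the space of spherical harmonics of degree `ℓ` on `S^d`. -/
noncomputable def Zdim (d ℓ : ℕ) : ℝ :=
  (2 * (ℓ : ℝ) + (d : ℝ) - 1) * Real.Gamma ((ℓ : ℝ) + (d : ℝ) - 1) /
    (Real.Gamma (d : ℝ) * Real.Gamma ((ℓ : ℝ) + 1))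

/-- The normalised Legendre polynomial `P_ℓ^{(d+1)}` for `S^d`. -/
noncomputable def normLegendre (d ℓ : ℕ) (t : ℝ) : ℝ :=
  jacobiP (((d : ℝ) - 2) / 2) (((d : ℝ) - 2) / 2) ℓ t /
    jacobiP (((d : ℝ) - 2) / 2) (((d : ℝ) - 2) / 2) ℓ 1

/-- The Dirichlet kernel on `S^d`: `v_L^{(d)}(t) = Σ_{ℓ=0}^L Z(d,ℓ) P_ℓ^{(d+1)}(t)`. -/
noncomputable def sphDirichlet (d L : ℕ) (t : ℝ) : ℝ :=
  ∑ ℓ ∈ Finset.range (L + 1), Zdim d ℓ * normLegendre d ℓ t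

/-- The filtered kernel on `S^d`: `v_{L,g}^{(d)}(t) = Σ_{ℓ=0}^∞ g(ℓ/L) Z(d,ℓ) P_ℓ^{(d+1)}(t)`. -/
noncomputable def sphFiltered (d : ℕ) (g : ℝ → ℝ) (L : ℕ) (t : ℝ) : ℝ :=
  ∑' ℓ : ℕ, g ((ℓ : ℝ) / (L : ℝ)) * Zdim d ℓ * normLegendre d ℓ t

/-- The surface area `|S^n| = 2π^{(n+1)/2}/Γ((n+1)/2)` of the unit sphere `S^n`. -/
noncomputable def sphereArea (n : ℕ) : ℝ :=
  2 * Real.pi ^ (((n : ℝ) + 1) / 2) / Real.Gamma (((n : ℝ) + 1) / 2)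

/-- `m_{a,b}(θ) = π^{−1/2} (sin(θ/2))^{−a−1/2} (cos(θ/2))^{−b−1/2}`. -/
noncomputable def mAB (a b θ : ℝ) : ℝ :=
  Real.pi ^ (-(1 / 2 : ℝ)) * Real.sin (θ / 2) ^ (-a - 1 / 2) *
    Real.cos (θ / 2) ^ (-b - 1 / 2)

/-- `ω_γ(z) = z − γπ/2 − π/4`. -/
noncomputable def omegaA (γ z : ℝ) : ℝ := z - γ * Real.pi / 2 - Real.pi / 4

/-! ## Part 1: three term recurrence -/

/-- Coefficients `1/(Γ(i+a+1) i!)`. -/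
noncomputable def jacD (a : ℝ) (i : ℕ) : ℝ :=
  (Real.Gamma ((i : ℝ) + a + 1) * (Nat.factorial i : ℝ))⁻¹

/-- `Q_n` with `P_n = Γ(n+a+1) Γ(n+b+1) Q_n`. -/
noncomputable def jacQ (a b : ℝ) (n : ℕ) (u v : ℝ) : ℝ :=
  ∑ p ∈ Finset.HasAntidiagonal.antidiagonal n, (jacD a p.1 * u ^ p.1) * (jacD b p.2 * v ^ p.2)

lemma jacD_succ {a : ℝ} (ha : -1 < a) (i : ℕ) :
    ((i : ℝ) + 1) * ((i : ℝ) + 1 + a) * jacD a (i + 1) = jacD a i := by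
  have hi : (0 : ℝ) ≤ i := Nat.cast_nonneg i
  have h1 : Real.Gamma ((i : ℝ) + a + 1 + 1) = ((i : ℝ) + a + 1) * Real.Gamma ((i : ℝ) + a + 1) :=
    Real.Gamma_add_one (by linarith)
  have h2 : Real.Gamma ((i : ℝ) + a + 1) ≠ 0 := (Real.Gamma_pos_of_pos (by linarith)).ne'
  have h3 : (Nat.factorial i : ℝ) ≠ 0 := by positivity
  have h4 : (i : ℝ) + a + 1 ≠ 0 := by linarith
  have h5 : (i : ℝ) + 1 ≠ 0 := by positivity
  unfold jacD
  rw [Nat.factorial_succ]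
  push_cast
  rw [show (i : ℝ) + 1 + a + 1 = (i : ℝ) + a + 1 + 1 by ring, h1]
  field_simp
  ring

lemma jacobiP_eq_jacQ (a b : ℝ) (n : ℕ) (x : ℝ) :
    jacobiP a b n x = Real.Gamma ((n : ℝ) + a + 1) * Real.Gamma ((n : ℝ) + b + 1) *
      jacQ a b n ((x - 1) / 2) ((x + 1) / 2) := by
  unfold jacobiP jacQ
  rw [Finset.Nat.sum_antidiagonal_eq_sum_range_succ_mk, Finset.mul_sum]
  refine Finset.sum_congr rfl fun s hs => ?_
  have hs' : s ≤ n := Nat.lt_succ_iff.mp (Finset.mem_range.mp hs)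
  simp only [jacD]
  rw [Nat.cast_sub hs']
  simp only [div_eq_mul_inv, mul_inv]
  ring

/-- sum with polynomial weight -/
noncomputable def jacW (a b : ℝ) (n : ℕ) (u v : ℝ) (w : ℝ → ℝ → ℝ) : ℝ :=
  ∑ p ∈ Finset.HasAntidiagonal.antidiagonal n, w p.1 p.2 * ((jacD a p.1 * u ^ p.1) * (jacD b p.2 * v ^ p.2))

lemma jacW_left {a b : ℝ} (ha : -1 < a) (n : ℕ) (u v : ℝ) (w : ℝ → ℝ → ℝ) :
    jacW a b (n + 1) u v (fun i j => i * (i + a) * w (i - 1) j) = u * jacW a b n u v w := by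
  unfold jacW
  rw [Finset.Nat.sum_antidiagonal_succ, Finset.mul_sum]
  simp only [Nat.cast_zero, zero_mul, zero_add]
  refine Finset.sum_congr rfl fun p _ => ?_
  rw [← jacD_succ ha p.1]
  push_cast
  rw [add_sub_cancel_right]
  ring

lemma jacW_right {a b : ℝ} (hb : -1 < b) (n : ℕ) (u v : ℝ) (w : ℝ → ℝ → ℝ) :
    jacW a b (n + 1) u v (fun i j => j * (j + b) * w i (j - 1)) = v * jacW a b n u v w := by
  unfold jacW
  rw [Finset.Nat.sum_antidiagonal_succ', Finset.mul_sum]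
  simp only [Nat.cast_zero, zero_mul, zero_add]
  refine Finset.sum_congr rfl fun p _ => ?_
  rw [← jacD_succ hb p.2]
  push_cast
  rw [add_sub_cancel_right]
  ring

lemma jacQ_eq_jacW (a b : ℝ) (n : ℕ) (u v : ℝ) : jacQ a b n u v = jacW a b n u v (fun _ _ => 1) := by
  simp [jacQ, jacW]

lemma jacQ_rec {a b : ℝ} (ha : -1 < a) (hb : -1 < b) (n : ℕ) (u v : ℝ) (huv : v - u = 1) :
    2 * ((n : ℝ) + 2) * (n + 2 + (a + b)) * (2 * n + 2 + (a + b)) * (n + 2 + a) * (n + 2 + b)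
      * jacQ a b (n + 2) u v =
    (2 * n + 3 + (a + b)) * ((2 * n + 4 + (a + b)) * (2 * n + 2 + (a + b)) * (u + v)
      + (a ^ 2 - b ^ 2)) * jacQ a b (n + 1) u v - 2 * (2 * n + 4 + (a + b)) * jacQ a b n u v := by
  have e1 : u * jacQ a b (n + 1) u v = jacW a b (n + 2) u v (fun i j => i * (i + a)) := by
    rw [jacQ_eq_jacW, ← jacW_left ha]; simp
  have e2 : v * jacQ a b (n + 1) u v = jacW a b (n + 2) u v (fun i j => j * (j + b)) := by
    rw [jacQ_eq_jacW, ← jacW_right hb]; simp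
  have e3 : u * (u * jacQ a b n u v) = jacW a b (n + 2) u v
      (fun i j => i * (i + a) * ((i - 1) * (i - 1 + a))) := by
    rw [jacQ_eq_jacW, ← jacW_left ha, ← jacW_left ha]; simp
  have e4 : v * (v * jacQ a b n u v) = jacW a b (n + 2) u v
      (fun i j => j * (j + b) * ((j - 1) * (j - 1 + b))) := by
    rw [jacQ_eq_jacW, ← jacW_right hb, ← jacW_right hb]; simp
  have e5 : u * (v * jacQ a b n u v) = jacW a b (n + 2) u v
      (fun i j => i * (i + a) * (j * (j + b))) := by
    rw [jacQ_eq_jacW, ← jacW_right hb, ← jacW_left ha]; simp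
  have key : 2 * ((n : ℝ) + 2) * (n + 2 + (a + b)) * (2 * n + 2 + (a + b)) * (n + 2 + a)
      * (n + 2 + b) * jacW a b (n + 2) u v (fun _ _ => 1) =
    (2 * n + 3 + (a + b)) * ((2 * n + 4 + (a + b)) * (2 * n + 2 + (a + b)) *
      (jacW a b (n + 2) u v (fun i j => i * (i + a)) + jacW a b (n + 2) u v (fun i j => j * (j + b)))
      + (a ^ 2 - b ^ 2) * (jacW a b (n + 2) u v (fun i j => j * (j + b)) -
        jacW a b (n + 2) u v (fun i j => i * (i + a))))
     - 2 * (2 * n + 4 + (a + b)) * (jacW a b (n + 2) u v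
      (fun i j => i * (i + a) * ((i - 1) * (i - 1 + a)))
      - 2 * jacW a b (n + 2) u v (fun i j => i * (i + a) * (j * (j + b)))
      + jacW a b (n + 2) u v (fun i j => j * (j + b) * ((j - 1) * (j - 1 + b)))) := by
    unfold jacW
    simp only [Finset.mul_sum, ← Finset.sum_add_distrib, ← Finset.sum_sub_distrib]
    refine Finset.sum_congr rfl fun p hp => ?_
    have hn : (n : ℝ) = p.1 + p.2 - 2 := by
      have := Finset.HasAntidiagonal.mem_antidiagonal.mp hp
      have h' : ((p.1 + p.2 : ℕ) : ℝ) = ((n + 2 : ℕ) : ℝ) := by rw [this]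
      push_cast at h'
      linarith
    rw [hn]
    ring
  rw [← jacQ_eq_jacW, ← e1, ← e2, ← e3, ← e4, ← e5] at key
  rw [key]
  obtain rfl : v = 1 + u := by linarith
  ring

lemma jacobiP_rec {a b : ℝ} (ha : -1 < a) (hb : -1 < b) (n : ℕ) (x : ℝ) :
    2 * ((n : ℝ) + 2) * (n + 2 + (a + b)) * (2 * n + 2 + (a + b)) * jacobiP a b (n + 2) x =
    (2 * n + 3 + (a + b)) * ((2 * n + 4 + (a + b)) * (2 * n + 2 + (a + b)) * x
      + (a ^ 2 - b ^ 2)) * jacobiP a b (n + 1) x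
      - 2 * (n + 1 + a) * (n + 1 + b) * (2 * n + 4 + (a + b)) * jacobiP a b n x := by
  have h := jacQ_rec ha hb n ((x - 1) / 2) ((x + 1) / 2) (by ring)
  rw [show (x - 1) / 2 + (x + 1) / 2 = x by ring] at h
  simp only [jacobiP_eq_jacQ]
  have hn : (0 : ℝ) ≤ n := Nat.cast_nonneg n
  have g : ∀ c : ℝ, -1 < c → Real.Gamma (((n + 1 : ℕ) : ℝ) + c + 1) =
      (n + 1 + c) * Real.Gamma ((n : ℝ) + c + 1) := by
    intro c hc
    push_cast
    rw [show (n : ℝ) + 1 + c + 1 = ((n : ℝ) + c + 1) + 1 by ring,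
      Real.Gamma_add_one (by linarith)]
    ring
  have g' : ∀ c : ℝ, -1 < c → Real.Gamma (((n + 2 : ℕ) : ℝ) + c + 1) =
      (n + 2 + c) * (n + 1 + c) * Real.Gamma ((n : ℝ) + c + 1) := by
    intro c hc
    have := g c hc
    push_cast at this ⊢
    rw [show (n : ℝ) + 2 + c + 1 = ((n : ℝ) + 1 + c + 1) + 1 by ring,
      Real.Gamma_add_one (by linarith), this]
    ring
  rw [g a ha, g b hb, g' a ha, g' b hb]
  linear_combination (n + 1 + a) * (n + 1 + b) * Real.Gamma ((n : ℝ) + a + 1) *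
    Real.Gamma ((n : ℝ) + b + 1) * h

/-! ## Part 2: perturbation of the constant coefficient recurrence -/

lemma disc_growth (b : ℕ → ℂ) (D : ℝ) (hD : 0 ≤ D) (n0 : ℕ)
    (hb : ∀ n ≥ n0, ‖b (n + 1) - b n‖ ≤ D / ((n : ℝ) + 1) ^ 2 * ‖b n‖)
    (n : ℕ) (hn0 : n0 ≤ n) (hn1 : 1 ≤ n) (hDn : 4 * D ≤ n) (k : ℕ) :
    ‖b (n + k) - b n‖ ≤ 2 * D * (1 / (n : ℝ) - 1 / ((n : ℝ) + k)) * ‖b n‖ := by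
  have hn : (1 : ℝ) ≤ n := by exact_mod_cast hn1
  induction k with
  | zero => simp
  | succ k ih =>
    have hk : (0 : ℝ) ≤ k := Nat.cast_nonneg k
    have h0 := hb (n + k) (by omega)
    have hB := norm_nonneg (b n)
    have h1 : ‖b (n + k)‖ ≤ 2 * ‖b n‖ := by
      have : ‖b (n + k)‖ ≤ ‖b (n + k) - b n‖ + ‖b n‖ := by
        simpa using norm_add_le (b (n + k) - b n) (b n)
      have h2 : 2 * D * (1 / (n : ℝ) - 1 / ((n : ℝ) + k)) ≤ 1 := by
        have : 0 ≤ 1 / ((n : ℝ) + k) := by positivity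
        have h3 : 2 * D * (1 / (n : ℝ)) ≤ 1 := by
          rw [mul_one_div, div_le_one (by linarith)]
          linarith
        nlinarith
      nlinarith
    have h3 : ‖b (n + (k + 1)) - b n‖ ≤ ‖b (n + k + 1) - b (n + k)‖ + ‖b (n + k) - b n‖ := by
      have := norm_add_le (b (n + k + 1) - b (n + k)) (b (n + k) - b n)
      simpa [add_assoc] using this
    have h4 : D / (((n + k : ℕ) : ℝ) + 1) ^ 2 * ‖b (n + k)‖ ≤
        2 * D * (1 / ((n : ℝ) + k) - 1 / ((n : ℝ) + k + 1)) * ‖b n‖ := by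
      have h5 : 1 / ((n : ℝ) + k + 1) ^ 2 ≤ 1 / ((n : ℝ) + k) - 1 / ((n : ℝ) + k + 1) := by
        rw [div_sub_div _ _ (by positivity) (by positivity), div_le_div_iff₀ (by positivity)
          (by positivity)]
        nlinarith
      calc D / (((n + k : ℕ) : ℝ) + 1) ^ 2 * ‖b (n + k)‖
          ≤ D / (((n + k : ℕ) : ℝ) + 1) ^ 2 * (2 * ‖b n‖) := by gcongr
        _ = 2 * D * (1 / ((n : ℝ) + k + 1) ^ 2) * ‖b n‖ := by push_cast; ring
        _ ≤ _ := by gcongr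
    calc ‖b (n + (k + 1)) - b n‖ ≤ _ := h3
      _ ≤ 2 * D * (1 / ((n : ℝ) + k) - 1 / ((n : ℝ) + k + 1)) * ‖b n‖
          + 2 * D * (1 / (n : ℝ) - 1 / ((n : ℝ) + k)) * ‖b n‖ := add_le_add (h0.trans h4) ih
      _ = _ := by push_cast; ring

lemma disc_limit (b : ℕ → ℂ) (D : ℝ) (hD : 0 ≤ D) (n0 : ℕ)
    (hb : ∀ n ≥ n0, ‖b (n + 1) - b n‖ ≤ D / ((n : ℝ) + 1) ^ 2 * ‖b n‖) :
    ∃ B : ℂ, ∀ n : ℕ, n0 ≤ n → 1 ≤ n → 4 * D ≤ n → ‖b n - B‖ ≤ 4 * D / n * ‖B‖ := by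
  have G := disc_growth b D hD n0 hb
  have G' : ∀ n : ℕ, n0 ≤ n → 1 ≤ n → 4 * D ≤ n → ∀ k,
      ‖b (n + k) - b n‖ ≤ 2 * D / n * ‖b n‖ := by
    intro n h1 h2 h3 k
    refine (G n h1 h2 h3 k).trans ?_
    have hn : (1 : ℝ) ≤ n := by exact_mod_cast h2
    have : 0 ≤ 1 / ((n : ℝ) + k) := by positivity
    have : 2 * D * (1 / (n : ℝ) - 1 / ((n : ℝ) + k)) ≤ 2 * D / n := by
      have : 0 ≤ 2 * D * (1 / ((n : ℝ) + k)) := by positivity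
      calc _ = 2 * D / n - 2 * D * (1 / ((n : ℝ) + k)) := by ring
        _ ≤ _ := by linarith
    gcongr
  obtain ⟨N, hN⟩ := exists_nat_ge (4 * D)
  set n1 := max (max n0 1) N with hn1
  have a1 : n0 ≤ n1 := by omega
  have a2 : 1 ≤ n1 := by omega
  have a3 : 4 * D ≤ n1 := hN.trans (by exact_mod_cast (by omega : N ≤ n1))
  have hbd : ∀ k, ‖b (n1 + k)‖ ≤ 2 * ‖b n1‖ := by
    intro k
    have := G' n1 a1 a2 a3 k
    have h1 : (1 : ℝ) ≤ n1 := by exact_mod_cast a2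
    have h2 : 2 * D / n1 ≤ 1 := by rw [div_le_one (by linarith)]; linarith
    have h3 : ‖b (n1 + k)‖ ≤ ‖b (n1 + k) - b n1‖ + ‖b n1‖ := by
      simpa using norm_add_le (b (n1 + k) - b n1) (b n1)
    nlinarith [norm_nonneg (b n1)]
  have hc : CauchySeq (fun k => b (n1 + k)) := by
    refine cauchySeq_of_le_tendsto_0' (fun k => 2 * D / ((n1 + k : ℕ) : ℝ) * (2 * ‖b n1‖)) ?_ ?_
    · intro n m hnm
      obtain ⟨j, rfl⟩ := Nat.exists_eq_add_of_le hnm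
      rw [dist_comm, dist_eq_norm, ← add_assoc]
      refine (G' (n1 + n) (by omega) (by omega) (a3.trans (by push_cast; linarith [Nat.cast_nonneg (α := ℝ) n])) j).trans ?_
      gcongr
      exact hbd n
    · have : Filter.Tendsto (fun k : ℕ => ((n1 + k : ℕ) : ℝ)) Filter.atTop Filter.atTop :=
        tendsto_natCast_atTop_atTop.comp (Filter.tendsto_atTop_mono (fun k => Nat.le_add_left k n1) Filter.tendsto_id)
      simpa using (this.const_div_atTop (2 * D)).mul_const (2 * ‖b n1‖)
  obtain ⟨B, hB⟩ := cauchySeq_tendsto_of_complete hc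
  refine ⟨B, fun n h1 h2 h3 => ?_⟩
  have hlim : Filter.Tendsto b Filter.atTop (nhds B) := by
    have : (fun k => b (n1 + k)) = fun k => b (k + n1) := by ext k; rw [add_comm]
    rw [this] at hB
    exact (Filter.tendsto_add_atTop_iff_nat n1).1 hB
  have hlim' : Filter.Tendsto (fun k => ‖b (n + k) - b n‖) Filter.atTop (nhds ‖B - b n‖) := by
    have h : (fun k => b (n + k)) = fun k => b (k + n) := by ext k; rw [add_comm]
    have : Filter.Tendsto (fun k => b (n + k)) Filter.atTop (nhds B) := by
      rw [h]; exact (Filter.tendsto_add_atTop_iff_nat n).2 hlim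
    exact (this.sub_const _).norm
  have h4 : ‖B - b n‖ ≤ 2 * D / n * ‖b n‖ := le_of_tendsto' hlim' (G' n h1 h2 h3)
  have hn : (1 : ℝ) ≤ n := by exact_mod_cast h2
  have h5 : 2 * D / n ≤ 1 / 2 := by rw [div_le_div_iff₀ (by linarith) (by norm_num)]; linarith
  have h6 : ‖b n‖ ≤ 2 * ‖B‖ := by
    have : ‖b n‖ ≤ ‖B - b n‖ + ‖B‖ := by
      have := norm_sub_le B (B - b n)
      rw [sub_sub_cancel] at this
      linarith
    nlinarith [norm_nonneg (b n)]
  rw [norm_sub_rev]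
  calc ‖B - b n‖ ≤ 2 * D / n * ‖b n‖ := h4
    _ ≤ 2 * D / n * (2 * ‖B‖) := by gcongr
    _ = _ := by ring

lemma disc_main (p : ℕ → ℝ) (θ K : ℝ) (hK : 0 ≤ K) (hS : 0 < Real.sin θ) (n0 : ℕ)
    (hp : ∀ n ≥ n0, |p (n + 2) - 2 * Real.cos θ * p (n + 1) + p n| ≤
      K / ((n : ℝ) + 1) ^ 2 * (|p (n + 1)| + |p n|)) :
    ∃ B : ℂ, ∀ n : ℕ, n0 ≤ n → 1 ≤ n → 8 * K ≤ n * Real.sin θ →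
      |p n - 2 * (B * Complex.exp (n * θ * Complex.I)).re| ≤ 16 * K / (n * Real.sin θ) * ‖B‖ := by
  set S := Real.sin θ with hSdef
  set E := Complex.exp (θ * Complex.I) with hE
  set E' := Complex.exp (-(θ * Complex.I)) with hE'
  have hEE : E * E' = 1 := by rw [hE, hE', ← Complex.exp_add]; simp
  have hE0 : E ≠ 0 := Complex.exp_ne_zero _
  have hE0' : E' ≠ 0 := Complex.exp_ne_zero _
  have nE : ‖E‖ = 1 := Complex.norm_exp_ofReal_mul_I θ
  have nE' : ‖E'‖ = 1 := by
    have : ‖E * E'‖ = 1 := by rw [hEE]; simp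
    rw [norm_mul, nE, one_mul] at this; exact this
  have hsum : E + E' = 2 * Real.cos θ := by
    rw [Complex.ofReal_cos, Complex.cos]; simp only [hE, hE']; ring_nf
  have hdiff : E - E' = 2 * Complex.I * S := by
    rw [hSdef, Complex.ofReal_sin, Complex.sin]
    simp only [hE, hE']
    ring_nf; rw [Complex.I_sq]; ring
  have hSC : (S : ℂ) ≠ 0 := by exact_mod_cast hS.ne'
  have hconj : (starRingEnd ℂ) E = E' := by
    rw [hE, ← Complex.exp_conj]; simp [hE']
  set b : ℕ → ℂ := fun n => E' ^ n * (p (n + 1) - E' * p n) / (2 * Complex.I * S) with hbdef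
  have hpow : ∀ n : ℕ, E ^ n * E' ^ n = 1 := fun n => by rw [← mul_pow, hEE, one_pow]
  have hbE : ∀ n, b n * E ^ n = (p (n + 1) - E' * p n) / (2 * Complex.I * S) := by
    intro n
    simp only [hbdef]
    rw [show E' ^ n * (↑(p (n + 1)) - E' * ↑(p n)) / (2 * Complex.I * ↑S) * E ^ n =
      (E ^ n * E' ^ n) * ((↑(p (n + 1)) - E' * ↑(p n)) / (2 * Complex.I * ↑S)) by ring, hpow, one_mul]
  have re2 : ∀ z : ℂ, ((2 * z.re : ℝ) : ℂ) = z + (starRingEnd ℂ) z := by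
    intro z; rw [Complex.add_conj]
  have hcE' : (starRingEnd ℂ) E' = E := by rw [← hconj, Complex.conj_conj]
  have f1 : ∀ n, p n = 2 * (b n * E ^ n).re := by
    intro n
    apply Complex.ofReal_injective
    rw [re2, hbE]
    simp only [map_div₀, map_sub, map_mul, hcE', Complex.conj_ofReal, Complex.conj_I, map_ofNat]
    field_simp
    linear_combination (-(p n : ℂ)) * hdiff
  have f2 : ∀ n, p (n + 1) = 2 * (b n * E ^ (n + 1)).re := by
    intro n
    apply Complex.ofReal_injective
    rw [re2, pow_succ, ← mul_assoc, hbE]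
    simp only [map_div₀, map_sub, map_mul, hcE', hconj, Complex.conj_ofReal, Complex.conj_I, map_ofNat]
    field_simp
    linear_combination (-(p (n+1) : ℂ)) * hdiff
  have g1 : ∀ n, |p n| ≤ 2 * ‖b n‖ := by
    intro n
    rw [f1 n, abs_mul, abs_two]
    have := Complex.abs_re_le_norm (b n * E ^ n)
    rw [norm_mul, norm_pow, nE, one_pow, mul_one] at this
    linarith
  have g2 : ∀ n, |p (n + 1)| ≤ 2 * ‖b n‖ := by
    intro n
    rw [f2 n, abs_mul, abs_two]
    have := Complex.abs_re_le_norm (b n * E ^ (n + 1))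
    rw [norm_mul, norm_pow, nE, one_pow, mul_one] at this
    linarith
  have hstep : ∀ n ≥ n0, ‖b (n + 1) - b n‖ ≤ (2 * K / S) / ((n : ℝ) + 1) ^ 2 * ‖b n‖ := by
    intro n hn
    have e : b (n + 1) - b n = E' ^ (n + 1) *
        ((p (n + 2) - 2 * Real.cos θ * p (n + 1) + p n : ℝ) : ℂ) / (2 * Complex.I * S) := by
      simp only [hbdef]
      push_cast [← Complex.ofReal_cos]
      rw [← hsum, ← sub_div]
      congr 1
      rw [show n + 1 + 1 = n + 2 by rfl, pow_succ]
      linear_combination (E' ^ n * p (n + 1)) * hEE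
    rw [e, norm_div, norm_mul, norm_pow, nE', one_pow, one_mul, Complex.norm_real, Real.norm_eq_abs]
    have : ‖2 * Complex.I * (S : ℂ)‖ = 2 * S := by
      simp [abs_of_pos hS]
    rw [this, div_le_iff₀ (by positivity)]
    refine (hp n hn).trans ?_
    calc K / ((n : ℝ) + 1) ^ 2 * (|p (n + 1)| + |p n|)
        ≤ K / ((n : ℝ) + 1) ^ 2 * (2 * ‖b n‖ + 2 * ‖b n‖) := by
          have := g1 n
          have := g2 n
          gcongr
      _ = _ := by field_simp; ring
  obtain ⟨B, hB⟩ := disc_limit b (2 * K / S) (by positivity) n0 hstep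
  refine ⟨B, fun n h1 h2 h3 => ?_⟩
  have hn : (1 : ℝ) ≤ n := by exact_mod_cast h2
  have := hB n h1 h2 (by rw [← mul_div_assoc, div_le_iff₀ hS]; linarith)
  have hexp : Complex.exp (n * θ * Complex.I) = E ^ n := by
    rw [hE, ← Complex.exp_nat_mul]; ring_nf
  rw [hexp, f1 n, ← mul_sub, ← Complex.sub_re, ← sub_mul, abs_mul, abs_two]
  have h4 := Complex.abs_re_le_norm ((b n - B) * E ^ n)
  rw [norm_mul, norm_pow, nE, one_pow, mul_one] at h4
  calc _ ≤ 2 * (4 * (2 * K / S) / n * ‖B‖) := by linarith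
    _ = _ := by field_simp; ring

/-! ## Part 3: coefficient estimates -/

lemma abs_sub_one_le_sq {y : ℝ} (hy : 0 ≤ y) : |y - 1| ≤ |y ^ 2 - 1| := by
  have : y ^ 2 - 1 = (y - 1) * (y + 1) := by ring
  rw [this, abs_mul, abs_of_pos (by linarith : 0 < y + 1)]
  nlinarith [abs_nonneg (y - 1)]

lemma coefA {σ N : ℝ} (hN : 2 ≤ N) (hT : 2 * σ ^ 2 ≤ N ^ 2) :
    |√(N + 1) / √N * (N * (2 * N + 1) / ((N + 1 / 2) ^ 2 - σ ^ 2 / 4)) - 2| ≤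
      (2 + 6 * σ ^ 2) / N ^ 2 := by
  have hN0 : 0 < N := by linarith
  set M := (N + 1 / 2) ^ 2 with hM
  have hMN : N ^ 2 ≤ M := by nlinarith
  have hM0 : 0 < M := by positivity
  have hW : M / 2 ≤ M - σ ^ 2 / 4 := by nlinarith
  have hW0 : 0 < M - σ ^ 2 / 4 := by linarith
  set y := √(N + 1) / √N * (N * (N + 1 / 2) / (M - σ ^ 2 / 4)) with hy
  have hy0 : 0 ≤ y := by positivity
  have e : √(N + 1) / √N * (N * (2 * N + 1) / (M - σ ^ 2 / 4)) - 2 = 2 * (y - 1) := by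
    rw [hy]; ring
  have hsq : y ^ 2 - 1 = (-M / 4 + M * σ ^ 2 / 2 - σ ^ 4 / 16) / (M - σ ^ 2 / 4) ^ 2 := by
    rw [hy, mul_pow, div_pow, div_pow, Real.sq_sqrt (by linarith), Real.sq_sqrt (by linarith)]
    have h0 : M - σ ^ 2 / 4 ≠ 0 := hW0.ne'
    have h1 : (N + 1) / N * ((N * (N + 1 / 2)) ^ 2 / (M - σ ^ 2 / 4) ^ 2) =
      (M - 1 / 4) * M / (M - σ ^ 2 / 4) ^ 2 := by
      rw [div_mul_div_comm, div_eq_div_iff (by positivity) (by positivity)]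
      rw [hM]; ring
    rw [h1, div_sub_one (by positivity)]
    congr 1; ring
  have hb : |y ^ 2 - 1| ≤ (1 + 3 * σ ^ 2) / N ^ 2 := by
    rw [hsq, abs_div, abs_of_pos (by positivity : 0 < (M - σ ^ 2 / 4) ^ 2)]
    have n1 : |-M / 4 + M * σ ^ 2 / 2 - σ ^ 4 / 16| ≤ M / 4 * (1 + 3 * σ ^ 2) := by
      rw [abs_le]
      constructor <;> nlinarith [sq_nonneg σ, sq_nonneg (σ ^ 2), mul_nonneg hM0.le (sq_nonneg σ), mul_le_mul_of_nonneg_right (hT.trans hMN) (sq_nonneg σ)]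
    calc _ ≤ M / 4 * (1 + 3 * σ ^ 2) / (M / 2) ^ 2 := by gcongr
      _ = (1 + 3 * σ ^ 2) / M := by field_simp; ring
      _ ≤ _ := by gcongr
  rw [e, abs_mul, abs_two]
  calc _ ≤ 2 * ((1 + 3 * σ ^ 2) / N ^ 2) := by
        have := abs_sub_one_le_sq hy0
        linarith
    _ = _ := by ring

lemma coefB {σ δ N : ℝ} (hN : 2 ≤ N) (hT : 2 * σ ^ 2 ≤ N ^ 2) :
    |√(N + 1) / √N * (N * (σ * δ) / (((N + 1 / 2) ^ 2 - σ ^ 2 / 4) * (2 * N - 1)))| ≤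
      (2 * (σ ^ 2 + δ ^ 2)) / N ^ 2 := by
  have hN0 : 0 < N := by linarith
  set W := (N + 1 / 2) ^ 2 - σ ^ 2 / 4 with hWdef
  have hW : N ^ 2 / 2 ≤ W := by nlinarith
  have hW0 : 0 < W := by nlinarith
  have h1 : √(N + 1) / √N ≤ 2 := by
    rw [div_le_iff₀ (by positivity)]
    rw [show (2 : ℝ) = √4 by rw [show (4 : ℝ) = 2 ^ 2 by norm_num]; simp]
    rw [← Real.sqrt_mul (by norm_num)]
    exact Real.sqrt_le_sqrt (by linarith)
  have h2 : 0 < 2 * N - 1 := by linarith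
  rw [abs_mul, abs_div (N * (σ * δ)), abs_of_nonneg (by positivity : 0 ≤ √(N + 1) / √N),
    abs_of_pos (by positivity : 0 < W * (2 * N - 1)), abs_mul, abs_of_pos hN0]
  have h3 : |σ * δ| ≤ (σ ^ 2 + δ ^ 2) / 2 := by
    rw [abs_le]; constructor <;> nlinarith [sq_nonneg (σ - δ), sq_nonneg (σ + δ)]
  calc _ ≤ 2 * (N * ((σ ^ 2 + δ ^ 2) / 2) / (N ^ 2 / 2 * N)) := by
        gcongr; linarith
    _ = _ := by field_simp

lemma coefC {σ δ N : ℝ} (hN : 2 ≤ N) (hT : 2 * (σ ^ 2 + δ ^ 2) ≤ N ^ 2) :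
    |√(N + 1) / √(N - 1) * (((N - 1 / 2) ^ 2 - δ ^ 2 / 4) * (2 * N + 1) /
      (((N + 1 / 2) ^ 2 - σ ^ 2 / 4) * (2 * N - 1))) - 1| ≤
      (2 + 2 * (σ ^ 2 + δ ^ 2)) / N ^ 2 := by
  have hN0 : 0 < N := by linarith
  have hN1 : 0 < N - 1 := by linarith
  have hN2 : 0 < N - 1 / 2 := by linarith
  set M := (N + 1 / 2) ^ 2 with hM
  set L := (N - 1 / 2) ^ 2 with hL
  have hMN : N ^ 2 ≤ M := by nlinarith
  have hLN : N ^ 2 / 4 ≤ L := by nlinarith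
  have hLM : L ≤ M := by nlinarith
  have hM0 : 0 < M := by positivity
  have hL0 : 0 < L := by positivity
  have hW : M / 2 ≤ M - σ ^ 2 / 4 := by nlinarith
  have hW0 : 0 < M - σ ^ 2 / 4 := by linarith
  set q := √(N + 1) / √(N - 1) * ((N - 1 / 2) / (N + 1 / 2)) with hq
  set r := (L - δ ^ 2 / 4) * M / ((M - σ ^ 2 / 4) * L) with hr
  have hs : 0 < √(N - 1) := Real.sqrt_pos.2 hN1
  have h21 : 0 < 2 * N - 1 := by linarith
  have e : √(N + 1) / √(N - 1) * ((L - δ ^ 2 / 4) * (2 * N + 1) /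
      ((M - σ ^ 2 / 4) * (2 * N - 1))) = q * r := by
    rw [hq, hr, mul_assoc]
    congr 1
    rw [div_mul_div_comm, div_eq_div_iff (by positivity) (by positivity)]
    rw [hM, hL]; ring
  have hq0 : 0 ≤ q := by positivity
  have q1 : |q - 1| ≤ 1 / N ^ 2 := by
    refine (abs_sub_one_le_sq hq0).trans ?_
    have : q ^ 2 - 1 = (1 / 2) / ((N - 1) * (N + 1 / 2) ^ 2) := by
      rw [hq, mul_pow, div_pow, div_pow, Real.sq_sqrt (by linarith), Real.sq_sqrt (by linarith)]
      field_simp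
      ring
    rw [this, abs_of_nonneg (by positivity), div_le_div_iff₀ (by positivity) (by positivity)]
    nlinarith
  have r1 : |r - 1| ≤ 2 * (σ ^ 2 + δ ^ 2) / N ^ 2 := by
    have : r - 1 = (L * σ ^ 2 / 4 - M * δ ^ 2 / 4) / ((M - σ ^ 2 / 4) * L) := by
      rw [hr, div_sub_one (by positivity)]; congr 1; ring
    rw [this, abs_div, abs_of_pos (by positivity : 0 < (M - σ ^ 2 / 4) * L)]
    have n1 : |L * σ ^ 2 / 4 - M * δ ^ 2 / 4| ≤ M * (σ ^ 2 + δ ^ 2) / 4 := by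
      have := mul_le_mul_of_nonneg_right hLM (sq_nonneg σ)
      have := mul_nonneg hL0.le (sq_nonneg σ)
      have := mul_nonneg hM0.le (sq_nonneg δ)
      rw [abs_le]; constructor <;> nlinarith
    calc _ ≤ M * (σ ^ 2 + δ ^ 2) / 4 / (M / 2 * (N ^ 2 / 4)) := by gcongr
      _ = _ := by field_simp
  have r2 : |r| ≤ 2 := by
    have : 2 * (σ ^ 2 + δ ^ 2) / N ^ 2 ≤ 1 := by rw [div_le_one (by positivity)]; exact hT
    have h3 : |r| ≤ |r - 1| + 1 := by
      have := abs_add_le (r - 1) 1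
      simpa using this
    linarith
  rw [e]
  calc |q * r - 1| = |(q - 1) * r + (r - 1)| := by ring_nf
    _ ≤ |q - 1| * |r| + |r - 1| := by rw [← abs_mul]; exact abs_add_le _ _
    _ ≤ 1 / N ^ 2 * 2 + 2 * (σ ^ 2 + δ ^ 2) / N ^ 2 := by gcongr
    _ = _ := by ring

lemma rec_solve {W N V t x P0 P1 P2 : ℝ} (hW : W ≠ 0) (h : 2 * N - 1 ≠ 0)
    (e : 2 * W * (2 * N - 1) * P2 =
      2 * N * ((2 * N + 1) * (2 * N - 1) * x + t) * P1 - 2 * V * (2 * N + 1) * P0) :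
    P2 = N * (2 * N + 1) / W * x * P1 + N * t / (W * (2 * N - 1)) * P1
      - V * (2 * N + 1) / (W * (2 * N - 1)) * P0 := by
  have : P2 = (2 * W * (2 * N - 1) * P2) / (2 * W * (2 * N - 1)) := by field_simp
  rw [this, e]
  field_simp

lemma rec_bound {cA cB cC x p0 p1 N n σ δ : ℝ} (hN0 : 0 < N) (hn1 : 0 ≤ n) (hNn : (n + 1) / 2 ≤ N)
    (hx : |x| ≤ 1) (hA : |cA| ≤ (2 + 6 * σ ^ 2) / N ^ 2)
    (hB : |cB| ≤ (2 * (σ ^ 2 + δ ^ 2)) / N ^ 2) (hC : |cC| ≤ (2 + 2 * (σ ^ 2 + δ ^ 2)) / N ^ 2) :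
    |cA * x * p1 + cB * p1 - cC * p0| ≤
      4 * (4 + 8 * (σ ^ 2 + δ ^ 2)) / (n + 1) ^ 2 * (|p1| + |p0|) := by
  calc |cA * x * p1 + cB * p1 - cC * p0|
      ≤ |cA * x * p1| + |cB * p1| + |cC * p0| :=
        (abs_sub _ _).trans (by gcongr; exact abs_add_le _ _)
    _ = |cA| * |x| * |p1| + |cB| * |p1| + |cC| * |p0| := by simp only [abs_mul]
    _ ≤ (2 + 6 * σ ^ 2) / N ^ 2 * 1 * |p1| + (2 * (σ ^ 2 + δ ^ 2)) / N ^ 2 * |p1|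
        + (2 + 2 * (σ ^ 2 + δ ^ 2)) / N ^ 2 * |p0| := by gcongr
    _ = ((2 + 6 * σ ^ 2 + 2 * (σ ^ 2 + δ ^ 2)) * |p1| + (2 + 2 * (σ ^ 2 + δ ^ 2)) * |p0|)
        / N ^ 2 := by ring
    _ ≤ ((4 + 8 * (σ ^ 2 + δ ^ 2)) * |p1| + (4 + 8 * (σ ^ 2 + δ ^ 2)) * |p0|)
        / ((n + 1) / 2) ^ 2 := by
        have := sq_nonneg σ
        have := sq_nonneg δ
        exact div_le_div₀ (by positivity) (add_le_add
          (mul_le_mul_of_nonneg_right (by linarith) (abs_nonneg _))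
          (mul_le_mul_of_nonneg_right (by linarith) (abs_nonneg _))) (by positivity) (by gcongr)
    _ = _ := by field_simp; ring

/-- Normalised sequence. -/
noncomputable def jacp (a b : ℝ) (x : ℝ) (n : ℕ) : ℝ :=
  √((n : ℝ) + (a + b + 1) / 2) * jacobiP a b n x

lemma jacp_rec {a b : ℝ} (ha : -1 < a) (hb : -1 < b) :
    ∃ K : ℝ, 0 < K ∧ ∃ n0 : ℕ, ∀ x : ℝ, |x| ≤ 1 → ∀ n ≥ n0,
      |jacp a b x (n + 2) - 2 * x * jacp a b x (n + 1) + jacp a b x n| ≤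
        K / ((n : ℝ) + 1) ^ 2 * (|jacp a b x (n + 1)| + |jacp a b x n|) := by
  set σ := a + b with hσ
  set δ := a - b with hδ
  have hT0 : 0 ≤ σ ^ 2 + δ ^ 2 := by positivity
  obtain ⟨n0, hn0⟩ := exists_nat_ge (3 + 2 * (σ ^ 2 + δ ^ 2))
  refine ⟨4 * (4 + 8 * (σ ^ 2 + δ ^ 2)), by positivity, n0, fun x hx n hn => ?_⟩
  have hn' : (n0 : ℝ) ≤ n := by exact_mod_cast hn
  set N := (n : ℝ) + 1 + (σ + 1) / 2 with hN
  have hσ1 : -2 < σ := by rw [hσ]; linarith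
  have hN2 : 2 + 2 * (σ ^ 2 + δ ^ 2) ≤ N := by rw [hN]; linarith
  have hN2' : 2 ≤ N := by linarith
  have hTN : 2 * (σ ^ 2 + δ ^ 2) ≤ N ^ 2 := by nlinarith
  have hTN' : 2 * σ ^ 2 ≤ N ^ 2 := by nlinarith [sq_nonneg δ]
  have hA := coefA hN2' hTN'
  have hB := coefB (δ := δ) hN2' hTN'
  have hC := coefC hN2' hTN
  have hrec := jacobiP_rec ha hb n x
  have i0 : (n : ℝ) + (a + b + 1) / 2 = N - 1 := by rw [hN]; ring
  have i1 : ((n + 1 : ℕ) : ℝ) + (a + b + 1) / 2 = N := by rw [hN]; push_cast; ring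
  have i2 : ((n + 2 : ℕ) : ℝ) + (a + b + 1) / 2 = N + 1 := by rw [hN]; push_cast; ring
  simp only [jacp, i0, i1, i2]
  have hW0 : 0 < (N + 1 / 2) ^ 2 - σ ^ 2 / 4 := by nlinarith
  set W := (N + 1 / 2) ^ 2 - σ ^ 2 / 4 with hW
  set V := (N - 1 / 2) ^ 2 - δ ^ 2 / 4 with hV
  have h21 : 0 < 2 * N - 1 := by linarith
  have hP : jacobiP a b (n + 2) x = N * (2 * N + 1) / W * x * jacobiP a b (n + 1) x
      + N * (σ * δ) / (W * (2 * N - 1)) * jacobiP a b (n + 1) x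
      - V * (2 * N + 1) / (W * (2 * N - 1)) * jacobiP a b n x := by
    have e : 2 * W * (2 * N - 1) * jacobiP a b (n + 2) x =
      2 * N * ((2 * N + 1) * (2 * N - 1) * x + σ * δ) * jacobiP a b (n + 1) x
       - 2 * V * (2 * N + 1) * jacobiP a b n x := by
      rw [hW, hV, hN, hσ, hδ]
      linear_combination hrec
    exact rec_solve hW0.ne' h21.ne' e
  have s0 : 0 < √(N - 1) := Real.sqrt_pos.2 (by linarith)
  have s1 : 0 < √N := Real.sqrt_pos.2 (by linarith)
  set P1 := jacobiP a b (n + 1) x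
  set P0 := jacobiP a b n x
  have e : √(N + 1) * jacobiP a b (n + 2) x - 2 * x * (√N * P1) + √(N - 1) * P0 =
      (√(N + 1) / √N * (N * (2 * N + 1) / W) - 2) * x * (√N * P1)
      + (√(N + 1) / √N * (N * (σ * δ) / (W * (2 * N - 1)))) * (√N * P1)
      - (√(N + 1) / √(N - 1) * (V * (2 * N + 1) / (W * (2 * N - 1))) - 1) * (√(N - 1) * P0) := by
    rw [hP]
    field_simp
    ring
  rw [e]
  set p1 := √N * P1
  set p0 := √(N - 1) * P0
  set cA := √(N + 1) / √N * (N * (2 * N + 1) / W) - 2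
  set cB := √(N + 1) / √N * (N * (σ * δ) / (W * (2 * N - 1)))
  set cC := √(N + 1) / √(N - 1) * (V * (2 * N + 1) / (W * (2 * N - 1))) - 1
  have hn1 : 0 ≤ (n : ℝ) := Nat.cast_nonneg n
  have hNn : ((n : ℝ) + 1) / 2 ≤ N := by rw [hN]; linarith
  exact rec_bound (by linarith) hn1 hNn hx hA hB hC



lemma choose_gamma (γ : ℝ) : ∀ k : ℕ, -1 < γ - k →
    Ring.choose γ k * (Real.Gamma (γ - k + 1) * (k.factorial : ℝ)) = Real.Gamma (γ + 1) := by
  intro k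
  induction k with
  | zero => intro _; simp
  | succ k ih =>
    intro h
    push_cast at h
    have ih := ih (by linarith)
    have hk : ((k.factorial : ℝ)) ≠ 0 := by positivity
    have e1 : (k.factorial : ℝ) * Ring.choose γ k = (descPochhammer ℤ k).smeval γ := by
      rw [Ring.choose_eq_smul, smul_eq_mul, mul_inv_cancel_left₀ hk]
    have e2 : ((k+1).factorial : ℝ) * Ring.choose γ (k+1) = (descPochhammer ℤ (k+1)).smeval γ := by
      rw [Ring.choose_eq_smul, smul_eq_mul, mul_inv_cancel_left₀ (by positivity)]
    have e3 : (descPochhammer ℤ (k+1)).smeval γ = (descPochhammer ℤ k).smeval γ * (γ - k) := by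
      simp [descPochhammer_succ_right, Polynomial.smeval_mul, Polynomial.smeval_natCast]
    have e4 : Real.Gamma (γ - k + 1) = (γ - k) * Real.Gamma (γ - k) :=
      Real.Gamma_add_one (by linarith)
    have e5 : γ - ((k+1 : ℕ) : ℝ) + 1 = γ - k := by push_cast; ring
    rw [e5, ← ih, e4]
    calc _ = ((k+1).factorial : ℝ) * Ring.choose γ (k+1) * Real.Gamma (γ - k) := by ring
      _ = _ := by rw [e2, e3, ← e1]; ring

lemma binom_hasSum (s : ℝ) {z : ℂ} (hz : ‖z‖ < 1) :
    HasSum (fun k : ℕ => ((Ring.choose s k : ℝ) : ℂ) * z ^ k) ((1 + z) ^ (s : ℂ)) ∧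
    Summable (fun k : ℕ => ‖((Ring.choose s k : ℝ) : ℂ) * z ^ k‖) := by
  have h := Complex.one_add_cpow_hasFPowerSeriesOnBall_zero (a := (s : ℂ))
  have hz' : z ∈ Metric.eball (0:ℂ) 1 := by
    rw [← ENNReal.ofReal_one, Metric.eball_ofReal]; simpa using hz
  have h1 := h.hasSum hz'
  have h2 := (binomialSeries ℂ (s:ℂ)).summable_norm_apply (Metric.eball_subset_eball h.r_le hz')
  simp only [binomialSeries_apply, List.ofFn_const, List.prod_replicate, smul_eq_mul, zero_add] at h1 h2
  constructor
  · simpa [Complex.ofReal_choose] using h1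
  · simpa [Complex.ofReal_choose] using h2

lemma coeff_cauchy {a : ℕ → ℂ} {f : ℂ → ℂ} (hf : DifferentiableOn ℂ f (Metric.ball 0 1))
    (h : ∀ t : ℂ, ‖t‖ < 1 → HasSum (fun n => a n * t ^ n) (f t)) (n : ℕ) :
    a n = (2 * π * Complex.I : ℂ)⁻¹ * ∮ t in C(0, 1/2), (t⁻¹) ^ n * (t⁻¹ * f t) := by
  have h1 : HasFPowerSeriesAt f (FormalMultilinearSeries.ofScalars ℂ a) 0 := by
    rw [hasFPowerSeriesAt_iff]
    filter_upwards [Metric.ball_mem_nhds (0:ℂ) one_pos] with t ht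
    simpa [mul_comm, FormalMultilinearSeries.coeff_ofScalars] using h t (by simpa using ht)
  have hd : DifferentiableOn ℂ f (Metric.closedBall 0 (((1/2 : ℝ≥0)) : ℝ)) :=
    hf.mono (Metric.closedBall_subset_ball (by norm_num))
  have h2 := (hd.hasFPowerSeriesOnBall (by norm_num)).hasFPowerSeriesAt
  have h3 := h1.eq_formalMultilinearSeries h2
  have h4 := congrArg (fun p : FormalMultilinearSeries ℂ ℂ ℂ => p n (fun _ => (1:ℂ))) h3
  simp only [cauchyPowerSeries_apply] at h4
  simpa [FormalMultilinearSeries.ofScalars] using h4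


lemma hasSum_of_eq_fun {f g : ℕ → ℂ} {c : ℂ} (h : HasSum g c) (e : ∀ m, f m = g m) : HasSum f c := by
  rw [show f = g from funext e]; exact h

lemma jac_coeff {α β : ℝ} (hα : -1 < α) (hβ : -1 < β) (n : ℕ) (x : ℝ) :
    jacobiP α β n x = ∑ p ∈ Finset.HasAntidiagonal.antidiagonal n,
      (Ring.choose ((n:ℝ) + β) p.1 * ((x-1)/2) ^ p.1) * (Ring.choose ((n:ℝ) + α) p.2 * ((x+1)/2) ^ p.2) := by
  rw [jacobiP_eq_jacQ, jacQ, Finset.mul_sum]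
  refine Finset.sum_congr rfl fun p hp => ?_
  rw [Finset.HasAntidiagonal.mem_antidiagonal] at hp
  have hn : (n:ℝ) = p.1 + p.2 := by rw [← hp]; push_cast; ring
  have p1 : (0:ℝ) ≤ p.1 := by positivity
  have p2 : (0:ℝ) ≤ p.2 := by positivity
  have c1 := choose_gamma ((n:ℝ) + β) p.1 (by rw [hn]; linarith)
  have c2 := choose_gamma ((n:ℝ) + α) p.2 (by rw [hn]; linarith)
  rw [show (n:ℝ) + β - p.1 + 1 = p.2 + β + 1 by rw [hn]; ring] at c1
  rw [show (n:ℝ) + α - p.2 + 1 = p.1 + α + 1 by rw [hn]; ring] at c2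
  have g1 : 0 < Real.Gamma (p.2 + β + 1) := Real.Gamma_pos_of_pos (by linarith)
  have g2 : 0 < Real.Gamma (p.1 + α + 1) := Real.Gamma_pos_of_pos (by linarith)
  have f1 : (0:ℝ) < p.1.factorial := by positivity
  have f2 : (0:ℝ) < p.2.factorial := by positivity
  rw [← c1, ← c2, jacD, jacD]
  generalize Ring.choose ((n:ℝ)+β) p.1 = A
  generalize Ring.choose ((n:ℝ)+α) p.2 = B
  field_simp

lemma jac_contour {α β : ℝ} (hα : -1 < α) (hβ : -1 < β) (n : ℕ) {x : ℝ} (hx : |x| ≤ 1) :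
    (jacobiP α β n x : ℂ) = (2 * π * Complex.I : ℂ)⁻¹ * ∮ t in C(0, 1/2), (t⁻¹) ^ n * (t⁻¹ *
      ((1 + (((x-1)/2 : ℝ) : ℂ) * t) ^ ((((n:ℝ) + β : ℝ)) : ℂ) *
       (1 + (((x+1)/2 : ℝ) : ℂ) * t) ^ ((((n:ℝ) + α : ℝ)) : ℂ))) := by
  have hx' := abs_le.1 hx
  have hu : ‖(((x-1)/2 : ℝ) : ℂ)‖ ≤ 1 := by
    rw [Complex.norm_real, Real.norm_eq_abs, abs_le]; constructor <;> linarith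
  have hv : ‖(((x+1)/2 : ℝ) : ℂ)‖ ≤ 1 := by
    rw [Complex.norm_real, Real.norm_eq_abs, abs_le]; constructor <;> linarith
  set u : ℂ := (((x-1)/2 : ℝ) : ℂ) with hu_def
  set v : ℂ := (((x+1)/2 : ℝ) : ℂ) with hv_def
  have key : ∀ c : ℂ, ‖c‖ ≤ 1 → ∀ t : ℂ, ‖t‖ < 1 → ‖c * t‖ < 1 := by
    intro c hc t ht
    rw [norm_mul]
    nlinarith [norm_nonneg c, norm_nonneg t]
  have := coeff_cauchy (a := fun m => ∑ p ∈ Finset.HasAntidiagonal.antidiagonal m,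
      (((Ring.choose ((n:ℝ) + β) p.1 : ℝ) : ℂ) * u ^ p.1) * (((Ring.choose ((n:ℝ) + α) p.2 : ℝ) : ℂ) * v ^ p.2))
    (f := fun t => (1 + u * t) ^ ((((n:ℝ) + β : ℝ)) : ℂ) * (1 + v * t) ^ ((((n:ℝ) + α : ℝ)) : ℂ)) ?_ ?_ n
  · rw [← this, jac_coeff hα hβ, hu_def, hv_def]
    push_cast
    rfl
  · intro t ht
    have ht : ‖t‖ < 1 := by simpa using ht
    apply DifferentiableAt.differentiableWithinAt
    apply DifferentiableAt.mul
    · exact DifferentiableAt.cpow_const (by fun_prop) (Complex.mem_slitPlane_of_norm_lt_one (key u hu t ht))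
    · exact DifferentiableAt.cpow_const (by fun_prop) (Complex.mem_slitPlane_of_norm_lt_one (key v hv t ht))
  · intro t ht
    obtain ⟨a1, a2⟩ := binom_hasSum ((n:ℝ) + β) (key u hu t ht)
    obtain ⟨b1, b2⟩ := binom_hasSum ((n:ℝ) + α) (key v hv t ht)
    have s := (summable_norm_sum_mul_antidiagonal_of_summable_norm a2 b2).of_norm
    have e := tsum_mul_tsum_eq_tsum_sum_antidiagonal_of_summable_norm a2 b2
    rw [a1.tsum_eq, b1.tsum_eq] at e
    have hs := s.hasSum
    rw [← e] at hs
    refine hasSum_of_eq_fun hs fun m => ?_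
    rw [Finset.sum_mul]
    refine Finset.sum_congr rfl fun p hp => ?_
    rw [Finset.HasAntidiagonal.mem_antidiagonal] at hp
    rw [← hp, pow_add, mul_pow, mul_pow]
    ring

lemma geom_circle {r f : ℂ → ℂ} {q : ℝ} (hq0 : 0 ≤ q) (hq : q < 1)
    (hr : ContinuousOn r (Metric.sphere 0 (1/2))) (hf : ContinuousOn f (Metric.sphere 0 (1/2)))
    (hrq : ∀ t ∈ Metric.sphere (0:ℂ) (1/2), ‖r t‖ ≤ q) :
    HasSum (fun n : ℕ => ∮ t in C(0, 1/2), r t ^ n * f t) (∮ t in C(0, 1/2), (1 - r t)⁻¹ * f t) := by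
  have hmem : ∀ θ : ℝ, circleMap (0:ℂ) (1/2) θ ∈ Metric.sphere (0:ℂ) (1/2) := fun θ =>
    circleMap_mem_sphere _ (by norm_num) _
  have hcr : Continuous (fun θ : ℝ => r (circleMap 0 (1/2) θ)) :=
    hr.comp_continuous (continuous_circleMap _ _) hmem
  have hcf : Continuous (fun θ : ℝ => f (circleMap 0 (1/2) θ)) :=
    hf.comp_continuous (continuous_circleMap _ _) hmem
  have hcd : Continuous (fun θ : ℝ => deriv (circleMap (0:ℂ) (1/2)) θ) := by
    simp only [deriv_circleMap]; fun_prop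
  refine intervalIntegral.hasSum_integral_of_dominated_convergence
    (fun n θ => ‖deriv (circleMap (0:ℂ) (1/2)) θ‖ * ‖f (circleMap 0 (1/2) θ)‖ * q ^ n)
    (fun n => ?_) (fun n => ?_) ?_ ?_ ?_
  · exact (hcd.smul ((hcr.pow n).mul hcf)).aestronglyMeasurable
  · refine Filter.Eventually.of_forall fun θ _ => ?_
    rw [norm_smul, norm_mul, norm_pow]
    have := pow_le_pow_left₀ (norm_nonneg _) (hrq _ (hmem θ)) n
    calc _ = ‖deriv (circleMap (0:ℂ) (1/2)) θ‖ * ‖f (circleMap 0 (1/2) θ)‖ * ‖r (circleMap 0 (1/2) θ)‖ ^ n := by ring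
      _ ≤ _ := mul_le_mul_of_nonneg_left this (by positivity)
  · exact Filter.Eventually.of_forall fun _ _ => (summable_geometric_of_lt_one hq0 hq).mul_left _
  · simp only [tsum_mul_left]
    exact ((hcd.norm.mul hcf.norm).mul continuous_const).intervalIntegrable _ _
  · refine Filter.Eventually.of_forall fun θ _ => HasSum.const_smul _ ?_
    exact (hasSum_geometric_of_norm_lt_one ((hrq _ (hmem θ)).trans_lt hq)).mul_right _

/-- The generating function for small `w`, with the branch data supplied abstractly. -/
lemma jac_gen_small {α β : ℝ} (hα : -1 < α) (hβ : -1 < β) {x : ℝ} (hx : |x| ≤ 1)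
    {w R : ℂ} (hw : ‖w‖ < 1/8) (hR2 : R ^ 2 = 1 - 2 * x * w + w ^ 2) (hR : 0 < R.re) :
    HasSum (fun n : ℕ => (jacobiP α β n x : ℂ) * w ^ n)
      (R⁻¹ * (2 / (1 - w + R)) ^ (α : ℂ) * (2 / (1 + w + R)) ^ (β : ℂ)) := by
  have hx' := abs_le.1 hx
  set ur : ℝ := (x-1)/2 with hur
  set vr : ℝ := (x+1)/2 with hvr
  have hu1 : |ur| ≤ 1 := by rw [abs_le]; constructor <;> linarith
  have hv1 : |vr| ≤ 1 := by rw [abs_le]; constructor <;> linarith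
  have hu : ‖(ur : ℂ)‖ ≤ 1 := by rwa [Complex.norm_real]
  have hv : ‖(vr : ℂ)‖ ≤ 1 := by rwa [Complex.norm_real]
  have hxn : ‖(x : ℂ)‖ ≤ 1 := by rwa [Complex.norm_real]
  have key : ∀ c : ℂ, ‖c‖ ≤ 1 → ∀ t : ℂ, ‖t‖ < 1 → ‖c * t‖ < 1 := by
    intro c hc t ht
    rw [norm_mul]
    nlinarith [norm_nonneg c, norm_nonneg t]
  have hwx : ‖(x:ℂ) * w‖ < 1/8 := by rw [norm_mul]; nlinarith [norm_nonneg w, norm_nonneg (x:ℂ)]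
  set D : ℂ := 1 - x * w + R with hD
  have hDre : 7/8 < D.re := by
    have := Complex.abs_re_le_norm ((x:ℂ) * w)
    have := abs_le.1 (this.trans hwx.le)
    simp only [hD, Complex.add_re, Complex.sub_re, Complex.one_re]
    linarith [this.2]
  have hDn : 7/8 < ‖D‖ := hDre.trans_le (Complex.re_le_norm D)
  have hD0 : D ≠ 0 := norm_pos_iff.1 (by linarith)
  set t1 : ℂ := 2 * w / D with ht1
  have ht1n : ‖t1‖ < 1/2 := by
    rw [ht1, norm_div, norm_mul, div_lt_iff₀ (by linarith)]
    norm_num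
    linarith
  set Q : ℂ → ℂ := fun t => D / 2 - w * ur * vr * t with hQ
  have hQne : ∀ t : ℂ, ‖t‖ ≤ 1/2 → Q t ≠ 0 := by
    intro t ht h0
    have h1 : D / 2 = w * ur * vr * t := sub_eq_zero.1 h0
    have h2 : ‖D / 2‖ = ‖w * ur * vr * t‖ := by rw [h1]
    rw [norm_div, norm_mul, norm_mul, norm_mul] at h2
    have h3 : ‖w‖ * ‖(ur:ℂ)‖ * ‖(vr:ℂ)‖ * ‖t‖ ≤ 1/8 * 1 * 1 * (1/2) := by gcongr
    norm_num at h2 h3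
    linarith
  have hDt : D * t1 = 2 * w := by rw [ht1]; field_simp
  have huv : (ur:ℂ) + vr = x := by rw [hur, hvr]; push_cast; ring
  have huv2 : 4 * (ur:ℂ) * vr = x^2 - 1 := by rw [hur, hvr]; push_cast; ring
  have hq3 : D / 2 + w * ur * vr * t1 = 1 - x * w := by
    have hq1 : D ^ 2 - 2 * (1 - x * w) * D + (1 - x*w)^2 = R^2 := by rw [hD]; ring
    have hq2 : D ^ 2 - 2 * (1 - x * w) * D + w^2 * (4 * ur * vr) = 0 := by
      rw [huv2]; linear_combination hq1 + hR2
    have : D * (D / 2 + w * ur * vr * t1) = D * (1 - x * w) := by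
      linear_combination hq2 / 2 + w * ur * vr * hDt
    exact mul_left_cancel₀ hD0 this
  have hfac : ∀ t : ℂ, t - w * ((1 + ur * t) * (1 + vr * t)) = (t - t1) * Q t := by
    intro t
    simp only [hQ]
    linear_combination -t * hq3 + hDt / 2 - w * t * huv
  have hQt1 : Q t1 = R := by
    simp only [hQ]
    linear_combination -hq3 + hD
  have hwre := abs_le.1 ((Complex.abs_re_le_norm w).trans hw.le)
  have hm0 : 1 - w + R ≠ 0 := by
    intro h
    have := congrArg Complex.re h
    simp only [Complex.add_re, Complex.sub_re, Complex.one_re, Complex.zero_re] at this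
    linarith [hwre.2]
  have hp0 : 1 + w + R ≠ 0 := by
    intro h
    have := congrArg Complex.re h
    simp only [Complex.add_re, Complex.one_re, Complex.zero_re] at this
    linarith [hwre.1]
  have hprod : (1 - w + R) * (1 + w + R) = 2 * D := by
    rw [hD]; linear_combination hR2
  have hut1 : 1 + ur * t1 = 2 / (1 + w + R) := by
    rw [eq_div_iff hp0]
    apply mul_left_cancel₀ hD0
    have : (ur:ℂ) = (x - 1)/2 := by rw [hur]; push_cast; ring
    rw [this]
    linear_combination (x-1)/2 * (1 + w + R) * hDt + hprod + (1 + w + R) * hD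
  have hvt1 : 1 + vr * t1 = 2 / (1 - w + R) := by
    rw [eq_div_iff hm0]
    apply mul_left_cancel₀ hD0
    have : (vr:ℂ) = (x + 1)/2 := by rw [hvr]; push_cast; ring
    rw [this]
    linear_combination (x+1)/2 * (1 - w + R) * hDt + hprod + (1 - w + R) * hD
  set ψ : ℂ → ℂ := fun t => (1 + ur * t) ^ (β:ℂ) * (1 + vr * t) ^ (α:ℂ) with hψ
  have hψd : ∀ t : ℂ, ‖t‖ < 1 → DifferentiableAt ℂ ψ t := by
    intro t ht
    apply DifferentiableAt.mul
    · exact DifferentiableAt.cpow_const (by fun_prop) (Complex.mem_slitPlane_of_norm_lt_one (key ur hu t ht))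
    · exact DifferentiableAt.cpow_const (by fun_prop) (Complex.mem_slitPlane_of_norm_lt_one (key vr hv t ht))
  have hsph : ∀ t ∈ Metric.sphere (0:ℂ) (1/2), ‖t‖ = 1/2 := fun t ht => by simpa using ht
  have hsph0 : ∀ t ∈ Metric.sphere (0:ℂ) (1/2), t ≠ 0 := fun t ht h0 => by
    have := hsph t ht; rw [h0] at this; norm_num at this
  have hψc : ContinuousOn ψ (Metric.sphere 0 (1/2)) := fun t ht =>
    (hψd t (by rw [hsph t ht]; norm_num)).continuousAt.continuousWithinAt
  have hgeo := geom_circle (r := fun t => w * (t⁻¹ * ((1 + ur * t) * (1 + vr * t))))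
    (f := fun t => t⁻¹ * ψ t) (q := ‖w‖ * (9/2)) (by positivity) (by linarith) ?_ ?_ ?_
  · have e0 : (2 * π * Complex.I : ℂ)⁻¹ * (∮ t in C(0, 1/2), (1 - w * (t⁻¹ * ((1 + ur * t) * (1 + vr * t))))⁻¹ * (t⁻¹ * ψ t))
        = R⁻¹ * (2 / (1 - w + R)) ^ (α : ℂ) * (2 / (1 + w + R)) ^ (β : ℂ) := by
      have e1 : (∮ t in C(0, 1/2), (1 - w * (t⁻¹ * ((1 + ur * t) * (1 + vr * t))))⁻¹ * (t⁻¹ * ψ t))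
          = ∮ t in C(0, 1/2), (t - t1)⁻¹ • ((Q t)⁻¹ * ψ t) := by
        apply circleIntegral.integral_congr (by norm_num)
        intro t ht
        have ht0 := hsph0 t ht
        have : (1 - w * (t⁻¹ * ((1 + ur * t) * (1 + vr * t)))) * t = (t - t1) * Q t := by
          rw [← hfac]; field_simp
        simp only [smul_eq_mul]
        rw [← mul_assoc, ← mul_inv, this, mul_inv, mul_assoc]
      have hdiff : DifferentiableOn ℂ (fun t => (Q t)⁻¹ * ψ t) (Metric.closedBall 0 (1/2)) := by
        intro t ht
        have ht : ‖t‖ ≤ 1/2 := by simpa using ht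
        apply DifferentiableAt.differentiableWithinAt
        apply DifferentiableAt.mul
        · exact DifferentiableAt.inv (by simp only [hQ]; fun_prop) (hQne t ht)
        · exact hψd t (by linarith)
      have e2 := hdiff.circleIntegral_sub_inv_smul (w := t1) (by simpa using ht1n)
      rw [e1, e2, smul_eq_mul, ← mul_assoc, inv_mul_cancel₀ Complex.two_pi_I_ne_zero, one_mul, hQt1]
      simp only [hψ]
      rw [hut1, hvt1]; ring
    rw [← e0]
    refine hasSum_of_eq_fun (hgeo.mul_left _) fun n => ?_
    rw [jac_contour hα hβ n hx, mul_assoc]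
    congr 1
    rw [mul_comm, ← smul_eq_mul, ← circleIntegral.integral_smul]
    apply circleIntegral.integral_congr (by norm_num)
    intro t ht
    have htn : ‖t‖ < 1 := by rw [hsph t ht]; norm_num
    have n1 := Complex.slitPlane_ne_zero (Complex.mem_slitPlane_of_norm_lt_one (key ur hu t htn))
    have n2 := Complex.slitPlane_ne_zero (Complex.mem_slitPlane_of_norm_lt_one (key vr hv t htn))
    simp only [smul_eq_mul, hψ]
    rw [← hur, ← hvr, Complex.ofReal_add, Complex.ofReal_add, Complex.ofReal_natCast]
    rw [Complex.cpow_add _ _ n1, Complex.cpow_add _ _ n2, Complex.cpow_natCast, Complex.cpow_natCast]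
    rw [mul_pow, mul_pow, mul_pow]
    ring
  · apply ContinuousOn.mul continuousOn_const
    exact (continuousOn_id.inv₀ hsph0).mul (by fun_prop)
  · exact (continuousOn_id.inv₀ hsph0).mul hψc
  · intro t ht
    have htn := hsph t ht
    rw [norm_mul, norm_mul, norm_mul, norm_inv, htn]
    have b1 : ‖1 + (ur:ℂ) * t‖ ≤ 3/2 := by
      refine (norm_add_le _ _).trans ?_
      rw [norm_mul, htn, norm_one]; linarith
    have b2 : ‖1 + (vr:ℂ) * t‖ ≤ 3/2 := by
      refine (norm_add_le _ _).trans ?_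
      rw [norm_mul, htn, norm_one]; linarith
    have := mul_le_mul b1 b2 (norm_nonneg _) (by norm_num)
    apply mul_le_mul_of_nonneg_left _ (norm_nonneg _)
    norm_num at this ⊢
    linarith

lemma hasSum_extend {a : ℕ → ℂ} {f : ℂ → ℂ} (hf : DifferentiableOn ℂ f (Metric.ball 0 1))
    (h : ∀ t : ℂ, ‖t‖ < 1/8 → HasSum (fun n => a n * t ^ n) (f t)) {w : ℂ} (hw : ‖w‖ < 1) :
    HasSum (fun n => a n * w ^ n) (f w) := by
  have h1 : HasFPowerSeriesAt f (FormalMultilinearSeries.ofScalars ℂ a) 0 := by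
    rw [hasFPowerSeriesAt_iff]
    filter_upwards [Metric.ball_mem_nhds (0:ℂ) (show (0:ℝ) < 1/8 by norm_num)] with t ht
    simpa [mul_comm, FormalMultilinearSeries.coeff_ofScalars] using h t (by simpa using ht)
  obtain ⟨r, hr1, hr2⟩ := exists_between hw
  lift r to ℝ≥0 using (norm_nonneg w).trans hr1.le
  have hr0 : 0 < r := by
    have := (norm_nonneg w).trans_lt hr1
    exact_mod_cast this
  have hd : DifferentiableOn ℂ f (Metric.closedBall 0 (r : ℝ)) :=
    hf.mono (Metric.closedBall_subset_ball hr2)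
  have h2 := hd.hasFPowerSeriesOnBall hr0
  have h3 := h1.eq_formalMultilinearSeries h2.hasFPowerSeriesAt
  rw [← h3] at h2
  have h4 := h2.hasSum (y := w) (by
    rw [← ENNReal.ofReal_coe_nnreal, Metric.eball_ofReal]; simpa using hr1)
  simpa [FormalMultilinearSeries.ofScalars, mul_comm] using h4

lemma sqrt_re {z : ℂ} (hz : 0 < z.re) :
    (z ^ (1/2 : ℂ)) ^ 2 = z ∧ 0 < (z ^ (1/2 : ℂ)).re ∧ |(z ^ (1/2 : ℂ)).im| < (z ^ (1/2 : ℂ)).re := by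
  have hz0 : z ≠ 0 := by rintro rfl; simp at hz
  have h1 : (z ^ (1/2 : ℂ)) ^ 2 = z := by
    rw [← Complex.cpow_nat_mul]; norm_num
  have h2 : 0 < (z ^ (1/2 : ℂ)).re := by
    rw [Complex.cpow_def_of_ne_zero hz0, Complex.exp_re]
    apply mul_pos (Real.exp_pos _)
    apply Real.cos_pos_of_mem_Ioo
    have : (Complex.log z * (1/2)).im = Complex.arg z / 2 := by
      rw [show (1/2 : ℂ) = ((1/2 : ℝ) : ℂ) by push_cast; rfl, Complex.im_mul_ofReal, Complex.log_im]; ring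
    rw [this]
    have := Complex.abs_arg_lt_pi_div_two_iff.2 (Or.inl hz)
    have := abs_lt.1 this
    constructor <;> linarith [Real.pi_pos]
  refine ⟨h1, h2, ?_⟩
  have h3 := congrArg Complex.re h1
  rw [sq, Complex.mul_re] at h3
  rw [← abs_of_pos h2]
  apply sq_lt_sq.1
  nlinarith

/-- the square root of `1 - 2 w cos θ + w²` -/
noncomputable def jacR (θ : ℝ) (w : ℂ) : ℂ :=
  (1 - w * Complex.exp (θ * Complex.I)) ^ (1/2 : ℂ) * (1 - w * Complex.exp (-θ * Complex.I)) ^ (1/2 : ℂ)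

lemma one_sub_re {z : ℂ} (hz : ‖z‖ < 1) : 0 < (1 - z).re := by
  have := (Complex.re_le_norm z)
  simp only [Complex.sub_re, Complex.one_re]; linarith

lemma norm_exp_neg (θ : ℝ) : ‖Complex.exp (-θ * Complex.I)‖ = 1 := by
  have := Complex.norm_exp_ofReal_mul_I (-θ)
  push_cast at this; exact this

lemma jacR_re {θ : ℝ} {w : ℂ} (h1 : 0 < (1 - w * Complex.exp (θ * Complex.I)).re)
    (h2 : 0 < (1 - w * Complex.exp (-θ * Complex.I)).re) :
    jacR θ w ^ 2 = 1 - 2 * Real.cos θ * w + w ^ 2 ∧ 0 < (jacR θ w).re := by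
  obtain ⟨a1, a2, a3⟩ := sqrt_re h1
  obtain ⟨b1, b2, b3⟩ := sqrt_re h2
  constructor
  · rw [jacR, mul_pow, a1, b1, Complex.ofReal_cos, Complex.cos]
    have : Complex.exp (θ * Complex.I) * Complex.exp (-θ * Complex.I) = 1 := by
      rw [← Complex.exp_add]; simp
    linear_combination w^2 * this
  · rw [jacR, Complex.mul_re]
    have := mul_lt_mul'' a3 b3 (abs_nonneg _) (abs_nonneg _)
    rw [← abs_mul] at this
    linarith [le_abs_self ((((1 - w * Complex.exp (θ * Complex.I)) ^ (1/2 : ℂ)).im) * ((1 - w * Complex.exp (-θ * Complex.I)) ^ (1/2 : ℂ)).im)]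

lemma two_div_re {z : ℂ} (hz : 0 < z.re) : 0 < (2 / z).re := by
  have hz0 : z ≠ 0 := by rintro rfl; simp at hz
  rw [Complex.div_re]
  have := Complex.normSq_pos.2 hz0
  simp
  positivity

noncomputable def jacF (α β θ : ℝ) (w : ℂ) : ℂ :=
  (jacR θ w)⁻¹ * (2 / (1 - w + jacR θ w)) ^ (α : ℂ) * (2 / (1 + w + jacR θ w)) ^ (β : ℂ)

lemma jacR_diff {θ : ℝ} {w : ℂ} (h1 : 0 < (1 - w * Complex.exp (θ * Complex.I)).re)
    (h2 : 0 < (1 - w * Complex.exp (-θ * Complex.I)).re) : DifferentiableAt ℂ (jacR θ) w := by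
  unfold jacR
  apply DifferentiableAt.mul
  · exact DifferentiableAt.cpow_const (by fun_prop) (Or.inl h1)
  · exact DifferentiableAt.cpow_const (by fun_prop) (Or.inl h2)

lemma jac_gen {α β : ℝ} (hα : -1 < α) (hβ : -1 < β) (θ : ℝ) {w : ℂ} (hw : ‖w‖ < 1) :
    HasSum (fun n : ℕ => (jacobiP α β n (Real.cos θ) : ℂ) * w ^ n) (jacF α β θ w) := by
  have hre : ∀ w : ℂ, ‖w‖ < 1 → 0 < (1 - w * Complex.exp (θ * Complex.I)).re ∧
    0 < (1 - w * Complex.exp (-θ * Complex.I)).re := by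
    intro w hw
    constructor <;> apply one_sub_re <;> rw [norm_mul]
    · rw [Complex.norm_exp_ofReal_mul_I]; simpa using hw
    · rw [norm_exp_neg]; simpa using hw
  refine hasSum_extend (f := jacF α β θ) ?_ ?_ hw
  · intro w hw
    have hw : ‖w‖ < 1 := by simpa using hw
    obtain ⟨h1, h2⟩ := hre w hw
    obtain ⟨h3, h4⟩ := jacR_re h1 h2
    have hd := jacR_diff h1 h2
    have p1 : 0 < (1 - w + jacR θ w).re := by
      rw [Complex.add_re]; linarith [one_sub_re hw]
    have p2 : 0 < (1 + w + jacR θ w).re := by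
      rw [Complex.add_re]; have := one_sub_re (z := -w) (by simpa using hw)
      rw [sub_neg_eq_add] at this; linarith
    have n1 : (1 - w + jacR θ w) ≠ 0 := by intro h; simp [h] at p1
    have n2 : (1 + w + jacR θ w) ≠ 0 := by intro h; simp [h] at p2
    have n3 : jacR θ w ≠ 0 := by intro h; simp [h] at h4
    apply DifferentiableAt.differentiableWithinAt
    unfold jacF
    apply DifferentiableAt.mul (DifferentiableAt.mul (hd.inv n3) _) _
    · exact DifferentiableAt.cpow_const (by fun_prop (disch := exact n1)) (Or.inl (two_div_re p1))
    · exact DifferentiableAt.cpow_const (by fun_prop (disch := exact n2)) (Or.inl (two_div_re p2))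
  · intro t ht
    obtain ⟨h1, h2⟩ := hre t (by linarith)
    obtain ⟨h3, h4⟩ := jacR_re h1 h2
    exact jac_gen_small hα hβ (Real.abs_cos_le_one θ) ht h3 h4

lemma jac_lim (α β : ℝ) {θ : ℝ} (h0 : 0 < θ) (hπ : θ < π) :
    Filter.Tendsto (fun r : ℝ => (√(1 - r) : ℂ) * jacF α β θ (r * Complex.exp (-θ * Complex.I)))
      (nhdsWithin 1 (Set.Iio 1))
      (nhds (((1 - Complex.exp (-θ * Complex.I) * Complex.exp (-θ * Complex.I)) ^ (1/2 : ℂ))⁻¹ *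
        (2 / (1 - Complex.exp (-θ * Complex.I))) ^ (α : ℂ) *
        (2 / (1 + Complex.exp (-θ * Complex.I))) ^ (β : ℂ))) := by
  have hsin : 0 < Real.sin θ := Real.sin_pos_of_pos_of_lt_pi h0 hπ
  have hexp : Complex.exp (-θ * Complex.I) = Real.cos θ - Real.sin θ * Complex.I := by
    have := Complex.exp_mul_I (-θ : ℂ)
    rw [this]; simp [sub_eq_add_neg]
  have hre : (Complex.exp (-θ * Complex.I)).re = Real.cos θ := by
    rw [hexp]; simp [Complex.cos_ofReal_re, Complex.sin_ofReal_im]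
  have him : (Complex.exp (-θ * Complex.I)).im = -Real.sin θ := by
    rw [hexp]; simp [Complex.cos_ofReal_im, Complex.sin_ofReal_re]
  have hee : Complex.exp (θ * Complex.I) * Complex.exp (-θ * Complex.I) = 1 := by
    rw [← Complex.exp_add]; simp
  have hn := norm_exp_neg θ
  set e := Complex.exp (-θ * Complex.I) with he
  have hsc := Real.sin_sq_add_cos_sq θ
  have hr1 : 0 < (1 - e * e).re := by
    rw [Complex.sub_re, Complex.mul_re, hre, him, Complex.one_re]; nlinarith
  have hr2 : 0 < (1 - e).re := by
    rw [Complex.sub_re, hre, Complex.one_re]; nlinarith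
  have hr3 : 0 < (1 + e).re := by
    rw [Complex.add_re, hre, Complex.one_re]; nlinarith
  set S : ℝ → ℂ := fun r => (1 - r * (e * e)) ^ (1/2 : ℂ) with hS
  set k : ℝ → ℂ := fun r => (√(1 - r) : ℂ) with hk
  set Φ : ℝ → ℂ := fun r => (S r)⁻¹ * (2 / (1 - r * e + k r * S r)) ^ (α : ℂ) *
    (2 / (1 + r * e + k r * S r)) ^ (β : ℂ) with hΦ
  have hk1 : k 1 = 0 := by simp [hk]
  have hSc : ContinuousAt S 1 := by
    refine ContinuousAt.cpow ?_ continuousAt_const ?_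
    · fun_prop
    · left; simpa using hr1
  have hkc : ContinuousAt k 1 := by
    simp only [hk]; fun_prop
  have hS1 : S 1 ≠ 0 := by
    simp only [hS]
    intro h
    have := (sqrt_re hr1).1
    simp at h
    rw [h] at hr1; simp at hr1
  have hc : ContinuousAt Φ 1 := by
    apply ContinuousAt.mul (ContinuousAt.mul (hSc.inv₀ hS1) _) _
    · refine ContinuousAt.cpow ?_ continuousAt_const ?_
      · apply ContinuousAt.div (by fun_prop) (by fun_prop)
        rw [hk1]; intro h; simp at h; simp [h] at hr2
      · left; rw [hk1]; simpa using two_div_re hr2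
    · refine ContinuousAt.cpow ?_ continuousAt_const ?_
      · apply ContinuousAt.div (by fun_prop) (by fun_prop)
        rw [hk1]; intro h; simp at h; simp [h] at hr3
      · left; rw [hk1]; simpa using two_div_re hr3
  have hlim : Filter.Tendsto Φ (nhdsWithin 1 (Set.Iio 1)) (nhds (Φ 1)) := hc.tendsto.mono_left nhdsWithin_le_nhds
  have hΦ1 : Φ 1 = ((1 - e * e) ^ (1/2 : ℂ))⁻¹ * (2 / (1 - e)) ^ (α : ℂ) * (2 / (1 + e)) ^ (β : ℂ) := by
    simp only [hΦ, hk1, hS]; simp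
  rw [← hΦ1]
  refine hlim.congr' ?_
  filter_upwards [self_mem_nhdsWithin] with r hr
  have hr : 0 < 1 - r := by simpa using hr
  have hR : jacR θ (r * e) = k r * S r := by
    rw [jacR, ← he]
    have e1 : 1 - (r:ℂ) * e * Complex.exp (θ * Complex.I) = ((1 - r : ℝ) : ℂ) := by
      push_cast; linear_combination -(r:ℂ) * hee
    have e2 : (((1 - r : ℝ) : ℂ)) ^ (1/2 : ℂ) = k r := by
      simp only [hk]
      rw [Real.sqrt_eq_rpow, Complex.ofReal_cpow hr.le]; push_cast; rfl
    rw [e1, e2, mul_assoc]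
  have hk0 : k r ≠ 0 := by
    simp only [hk]
    exact_mod_cast (Real.sqrt_pos.2 hr).ne'
  simp only [jacF, hΦ]
  rw [hR, mul_inv]
  change _ = k r * _
  field_simp

noncomputable def halfC (n : ℕ) : ℝ := Real.Gamma ((n:ℝ) + 1/2) / Real.Gamma ((n:ℝ) + 1)

lemma half_hasSum {z : ℂ} (hz : ‖z‖ < 1) :
    HasSum (fun n : ℕ => (halfC n : ℂ) * z ^ n) ((√π : ℂ) * ((1 - z) ^ (1/2 : ℂ))⁻¹) := by
  have h := Complex.one_div_one_sub_cpow_hasFPowerSeriesOnBall_zero (1/2)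
  have hz' : z ∈ Metric.eball (0:ℂ) 1 := by
    rw [← ENNReal.ofReal_one, Metric.eball_ofReal]; simpa using hz
  have h1 := (h.hasSum hz').mul_left (√π : ℂ)
  rw [zero_add, one_div ((1 - z) ^ (1/2:ℂ))] at h1
  refine hasSum_of_eq_fun h1 fun n => ?_
  have c := choose_gamma ((n:ℝ) - 1/2) n (by linarith)
  rw [show (n:ℝ) - 1/2 - n + 1 = 1/2 by ring, show (n:ℝ) - 1/2 + 1 = n + 1/2 by ring,
    Real.Gamma_one_half_eq] at c
  have c2 : halfC n = √π * Ring.choose ((n:ℝ) - 1/2) n := by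
    rw [halfC, Real.Gamma_nat_eq_factorial, ← c]
    have : (0:ℝ) < n.factorial := by positivity
    field_simp
  rw [c2]
  have e : (1/2 : ℂ) + n - 1 = (((n:ℝ) - 1/2 : ℝ) : ℂ) := by push_cast; ring
  simp only [FormalMultilinearSeries.ofScalars_apply_eq, smul_eq_mul]
  rw [e, ← Complex.ofReal_choose]
  push_cast; ring

lemma halfC_pos (n : ℕ) : 0 < halfC n :=
  div_pos (Real.Gamma_pos_of_pos (by positivity)) (Real.Gamma_pos_of_pos (by positivity))

lemma gamma_mid {s : ℝ} (hs : 0 < s) : Real.Gamma (s + 1/2) ^ 2 ≤ Real.Gamma s * Real.Gamma (s + 1) := by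
  have h := Real.Gamma_mul_add_mul_le_rpow_Gamma_mul_rpow_Gamma hs (show 0 < s + 1 by linarith)
    (show (0:ℝ) < 1/2 by norm_num) (show (0:ℝ) < 1/2 by norm_num) (by norm_num)
  rw [show 1/2 * s + 1/2 * (s+1) = s + 1/2 by ring, ← Real.sqrt_eq_rpow, ← Real.sqrt_eq_rpow] at h
  have g1 := Real.Gamma_pos_of_pos hs
  have g2 := Real.Gamma_pos_of_pos (show 0 < s + 1 by linarith)
  have g3 := Real.Gamma_pos_of_pos (show 0 < s + 1/2 by linarith)
  calc _ ≤ (√(Real.Gamma s) * √(Real.Gamma (s+1))) ^ 2 := pow_le_pow_left₀ g3.le h 2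
    _ = _ := by rw [mul_pow, Real.sq_sqrt g1.le, Real.sq_sqrt g2.le]

lemma halfC_sq {n : ℕ} (hn : 1 ≤ n) : 1 / ((n:ℝ) + 1/2) ≤ halfC n ^ 2 ∧ halfC n ^ 2 ≤ 1 / n := by
  have hn' : (1:ℝ) ≤ n := by exact_mod_cast hn
  have a := gamma_mid (show (0:ℝ) < n by linarith)
  have b := gamma_mid (show (0:ℝ) < n + 1/2 by linarith)
  have c := Real.Gamma_add_one (show (n:ℝ) ≠ 0 by linarith)
  have d := Real.Gamma_add_one (show (n:ℝ) + 1/2 ≠ 0 by linarith)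
  rw [show (n:ℝ) + 1/2 + 1/2 = n + 1 by ring, d] at b
  have g1 := Real.Gamma_pos_of_pos (show (0:ℝ) < n by linarith)
  have g2 := Real.Gamma_pos_of_pos (show (0:ℝ) < n + 1 by linarith)
  rw [halfC, div_pow]
  constructor
  · rw [div_le_div_iff₀ (by linarith) (by positivity)]; nlinarith
  · rw [div_le_div_iff₀ (by positivity) (by linarith)]
    calc _ ≤ (Real.Gamma n * Real.Gamma (n+1)) * n := mul_le_mul_of_nonneg_right a (by linarith)
      _ = (n * Real.Gamma n) * Real.Gamma (n+1) := by ring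
      _ = _ := by rw [← c]; ring

lemma half_close_aux {h a n σ : ℝ} (hn : 1 ≤ n) (hσ : -(1/2) < σ) (hh : 0 < h) (ha : 0 < a)
    (h1 : 1/(n+1/2) ≤ h^2) (h2 : h^2 ≤ 1/n) (ha2 : a^2 = 1/(n+σ)) :
    |a - h| ≤ (4 * |σ| + 2) / (n * √n) := by
  have hN : n / 2 ≤ n + σ := by linarith
  have hsn : 0 < √n := Real.sqrt_pos.2 (by linarith)
  have hsq : √n ^ 2 = n := Real.sq_sqrt (by linarith)
  have u1 : |a^2 - h^2| ≤ (2 * |σ| + 1) / n^2 := by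
    have b1 : |1/(n+σ) - 1/n| ≤ (2 * |σ| + 1)/n^2 := by
      have : 1/(n+σ) - 1/n = -σ / ((n+σ)*n) := by
        have : n + σ ≠ 0 := by linarith
        field_simp; ring
      rw [this, abs_div, abs_neg, abs_of_pos (show 0 < (n+σ)*n by nlinarith), div_le_div_iff₀ (by nlinarith) (by positivity)]
      nlinarith [abs_nonneg σ, mul_nonneg (abs_nonneg σ) (show 0 ≤ n*((n+σ)-n/2) by nlinarith), mul_pos (show 0 < n + σ by linarith) (show 0 < n by linarith)]
    have b2 : |1/(n+σ) - 1/(n+1/2)| ≤ (2 * |σ| + 1)/n^2 := by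
      have : 1/(n+σ) - 1/(n+1/2) = (1/2 - σ) / ((n+σ)*(n+1/2)) := by
        have : n + σ ≠ 0 := by linarith
        field_simp; ring
      have b3 : |1/2 - σ| ≤ 1/2 + |σ| := by
        refine (abs_sub _ _).trans ?_; rw [abs_of_pos (by norm_num : (0:ℝ) < 1/2)]
      have b4 : n^2 / 2 ≤ (n+σ)*(n+1/2) := by nlinarith
      rw [this, abs_div, abs_of_pos (show 0 < (n+σ)*(n+1/2) by nlinarith)]
      calc _ ≤ (1/2 + |σ|) / (n^2/2) := div_le_div₀ (by positivity) b3 (by positivity) b4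
        _ = _ := by field_simp; ring
    rw [ha2]
    rw [abs_le] at b1 b2 ⊢
    constructor <;> linarith
  have hlow : 1 / 2 ≤ h * √n := by
    have : (1/2)^2 ≤ (h * √n)^2 := by
      rw [mul_pow, hsq]
      have : 1/(n+1/2) * n ≤ h^2 * n := mul_le_mul_of_nonneg_right h1 (by linarith)
      have : (1/2)^2 ≤ 1/(n+1/2) * n := by
        rw [div_mul_eq_mul_div, le_div_iff₀ (by linarith)]; nlinarith
      linarith
    exact (pow_le_pow_iff_left₀ (by norm_num) (by positivity) (by norm_num)).1 this
  have e : |a - h| * (a + h) = |a^2 - h^2| := by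
    rw [← abs_of_pos (show 0 < a + h by linarith), ← abs_mul]; congr 1
    ring
  rw [le_div_iff₀ (by positivity)]
  have u2 : |a - h| * h ≤ (2 * |σ| + 1) / n^2 := by
    rw [← e] at u1
    nlinarith [mul_nonneg (abs_nonneg (a-h)) ha.le]
  rw [le_div_iff₀ (by positivity)] at u2
  have u3 : |a - h| * (n * √n) * (h * √n) * 1 ≤ (2 * |σ| + 1) := by
    calc _ = |a - h| * h * n * (√n ^2) := by ring
      _ = |a - h| * h * n^2 := by rw [hsq]; ring
      _ ≤ _ := u2
  have u4 : 0 ≤ |a - h| * (n * √n) := by positivity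
  nlinarith

lemma half_close {σ : ℝ} (hσ : -(1/2) < σ) {n : ℕ} (hn : 1 ≤ n) :
    |1 / √((n:ℝ) + σ) - halfC n| ≤ (4 * |σ| + 2) / (n * √n) := by
  have hn' : (1:ℝ) ≤ n := by exact_mod_cast hn
  obtain ⟨h1, h2⟩ := halfC_sq hn
  refine half_close_aux hn' hσ (halfC_pos n) (by have := Real.sqrt_pos.2 (show 0 < (n:ℝ) + σ by linarith); positivity) h1 h2 ?_
  rw [div_pow, Real.sq_sqrt (by linarith), one_pow]

lemma abel_identify {P : ℕ → ℝ} {σ θ M : ℝ} {B L : ℂ} {F : ℂ → ℂ} {n1 : ℕ} (hσ : -(1/2) < σ)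
    (h0 : 0 < θ) (hπ : θ < π)
    (hP : ∀ n ≥ n1, 1 ≤ n → |√((n:ℝ) + σ) * P n - 2 * (B * Complex.exp (n * θ * Complex.I)).re| ≤ M / n)
    (hF : ∀ w : ℂ, ‖w‖ < 1 → HasSum (fun n => (P n : ℂ) * w ^ n) (F w))
    (hL : Filter.Tendsto (fun r : ℝ => (√(1 - r) : ℂ) * F (r * Complex.exp (-θ * Complex.I)))
      (nhdsWithin 1 (Set.Iio 1)) (nhds L)) :
    (√π : ℂ) * B = L := by
  have hsin : 0 < Real.sin θ := Real.sin_pos_of_pos_of_lt_pi h0 hπ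
  set e := Complex.exp (θ * Complex.I) with he
  set e' := Complex.exp (-θ * Complex.I) with he'
  have hee : e * e' = 1 := by rw [he, he', ← Complex.exp_add]; simp
  have hne : ‖e‖ = 1 := Complex.norm_exp_ofReal_mul_I θ
  have hne' : ‖e'‖ = 1 := norm_exp_neg θ
  have hconj : (starRingEnd ℂ) e = e' := by
    rw [he, he', ← Complex.exp_conj]; simp
  have hre2 : ∀ n : ℕ, ((2 * (B * Complex.exp (n * θ * Complex.I)).re : ℝ) : ℂ) =
      B * e ^ n + (starRingEnd ℂ) B * e' ^ n := by
    intro n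
    have : Complex.exp (n * θ * Complex.I) = e ^ n := by
      rw [he, ← Complex.exp_nat_mul]; ring_nf
    rw [this, ← hconj, ← map_pow, ← map_mul, Complex.add_conj]
  set d : ℕ → ℝ := fun n => P n - halfC n * (2 * (B * Complex.exp (n * θ * Complex.I)).re) with hd
  have hB2 : ∀ n : ℕ, |2 * (B * Complex.exp (n * θ * Complex.I)).re| ≤ 2 * ‖B‖ := by
    intro n
    rw [abs_mul, abs_of_pos (by norm_num : (0:ℝ) < 2)]
    have := Complex.abs_re_le_norm (B * Complex.exp (n * θ * Complex.I))
    have e3 : ‖Complex.exp (n * θ * Complex.I)‖ = 1 := by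
      have := Complex.norm_exp_ofReal_mul_I (n * θ); push_cast at this; exact this
    rw [norm_mul, e3] at this
    linarith
  set C : ℝ := 2 * |M| + 2 * ‖B‖ * (4 * |σ| + 2) with hC
  have hdb : ∀ n ≥ n1, 1 ≤ n → |d n| ≤ C / (n * √n) := by
    intro n hn hn1
    have hn' : (1:ℝ) ≤ n := by exact_mod_cast hn1
    have hN : 0 < √((n:ℝ) + σ) := Real.sqrt_pos.2 (by linarith)
    have hsn : 0 < √(n:ℝ) := Real.sqrt_pos.2 (by linarith)
    have a := hP n hn hn1
    have b := half_close hσ hn1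
    have c := hB2 n
    simp only [hd]
    generalize 2 * (B * Complex.exp (n * θ * Complex.I)).re = X at a c ⊢
    have e1 : P n - halfC n * X = (√((n:ℝ) + σ) * P n - X) / √((n:ℝ) + σ) + X * (1 / √((n:ℝ) + σ) - halfC n) := by
      field_simp; ring
    have e2 : √(n:ℝ) / 2 ≤ √((n:ℝ) + σ) := by
      apply Real.le_sqrt_of_sq_le
      rw [div_pow, Real.sq_sqrt (by linarith)]; linarith
    rw [e1]
    refine (abs_add_le _ _).trans ?_
    rw [abs_div, abs_mul, abs_of_pos hN]
    have b1 : |√((n:ℝ) + σ) * P n - X| / √((n:ℝ) + σ) ≤ (|M| / n) / (√(n:ℝ) / 2) := by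
      apply div_le_div₀ (by positivity) (a.trans _) (by positivity) e2
      exact div_le_div_of_nonneg_right (le_abs_self M) (by linarith)
    have b2 : |X| * |1 / √((n:ℝ) + σ) - halfC n| ≤ 2 * ‖B‖ * ((4 * |σ| + 2) / (n * √n)) :=
      mul_le_mul c b (abs_nonneg _) (by positivity)
    refine (add_le_add b1 b2).trans (le_of_eq ?_)
    rw [hC]; field_simp
  have hsum : Summable (fun n => |d n|) := by
    have s1 : Summable (fun n : ℕ => C / ((n:ℝ) * √n)) := by
      have := (Real.summable_one_div_nat_rpow (p := 3/2)).2 (by norm_num)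
      refine (this.mul_left C).congr fun n => ?_
      rw [Real.sqrt_eq_rpow]
      rcases Nat.eq_zero_or_pos n with rfl | hn
      · simp
      · have hn' : (0:ℝ) < n := by exact_mod_cast hn
        have : (n:ℝ) ^ (3/2 : ℝ) = n * (n:ℝ) ^ (1/2 : ℝ) := by
          rw [← Real.rpow_one_add' hn'.le (by norm_num)]; norm_num
        rw [this]; ring
    refine Summable.of_norm_bounded_eventually_nat s1 ?_
    filter_upwards [Filter.eventually_ge_atTop n1, Filter.eventually_ge_atTop 1] with n a b
    rw [Real.norm_eq_abs, abs_abs]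
    exact hdb n a b
  set S := ∑' n, |d n| with hS
  have hr1 : 0 < (1 - e' * e').re := by
    have hexp : e' = Real.cos θ - Real.sin θ * Complex.I := by
      have := Complex.exp_mul_I (-θ : ℂ)
      rw [he', this]; simp [sub_eq_add_neg]
    have hre : e'.re = Real.cos θ := by
      rw [hexp]; simp [Complex.cos_ofReal_re, Complex.sin_ofReal_im]
    have him : e'.im = -Real.sin θ := by
      rw [hexp]; simp [Complex.cos_ofReal_im, Complex.sin_ofReal_re]
    rw [Complex.sub_re, Complex.mul_re, hre, him, Complex.one_re]
    nlinarith [Real.sin_sq_add_cos_sq θ]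
  set T : ℝ → ℂ := fun r => ((1 - r * (e' * e')) ^ (1/2 : ℂ))⁻¹ with hT
  have hTc : ContinuousAt T 1 := by
    apply ContinuousAt.inv₀
    · refine ContinuousAt.cpow (by fun_prop) continuousAt_const ?_
      left; simpa using hr1
    · intro h
      have := (sqrt_re hr1).1
      simp at h
      rw [h] at hr1; simp at hr1
  -- the key identity
  have hid : ∀ r : ℝ, 0 < r → r < 1 →
      ‖(√(1 - r) : ℂ) * F (r * e') - √π * B - √(1-r) * (√π * (starRingEnd ℂ) B * T r)‖ ≤ √(1 - r) * S := by
    intro r hr0 hr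
    have hrn : ‖(r:ℂ)‖ = r := by rw [Complex.norm_real, Real.norm_eq_abs, abs_of_pos hr0]
    have hk : 0 < √(1 - r) := Real.sqrt_pos.2 (by linarith)
    have w1 : ‖(r:ℂ) * e'‖ < 1 := by rw [norm_mul, hne', hrn]; linarith
    have w2 : ‖(r:ℂ) * (e' * e')‖ < 1 := by rw [norm_mul, norm_mul, hne', hrn]; linarith
    have w3 : ‖(r:ℂ)‖ < 1 := by rw [hrn]; exact hr
    have H1 := hF _ w1
    have H2 := (half_hasSum w3).mul_left B
    have H3 := (half_hasSum w2).mul_left ((starRingEnd ℂ) B)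
    have H := (H1.sub H2).sub H3
    have H' : HasSum (fun n => (d n : ℂ) * (r * e') ^ n) _ := hasSum_of_eq_fun H (fun n => by
      simp only [hd]
      rw [Complex.ofReal_sub, Complex.ofReal_mul, hre2 n]
      rw [mul_pow, mul_pow (r:ℂ) (e' * e'), mul_pow e' e']
      have : e ^ n * e' ^ n = 1 := by rw [← mul_pow, hee, one_pow]
      linear_combination -(halfC n : ℂ) * B * r ^ n * this)
    have hle : ‖∑' n, (d n : ℂ) * (r * e') ^ n‖ ≤ S := by
      refine tsum_of_norm_bounded hsum.hasSum fun n => ?_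
      rw [norm_mul, norm_pow, Complex.norm_real, Real.norm_eq_abs]
      have := pow_le_one₀ (norm_nonneg ((r:ℂ)*e')) w1.le (n := n)
      nlinarith [abs_nonneg (d n)]
    rw [H'.tsum_eq] at hle
    have e2 : ((1 - r : ℂ)) ^ (1/2 : ℂ) = (√(1-r) : ℂ) := by
      rw [Real.sqrt_eq_rpow, Complex.ofReal_cpow (by linarith)]; push_cast; rfl
    rw [e2] at hle
    have hk0 : (√(1-r) : ℂ) ≠ 0 := by exact_mod_cast hk.ne'
    have e3 : (√(1 - r) : ℂ) * F (r * e') - √π * B - √(1-r) * (√π * (starRingEnd ℂ) B * T r) =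
      √(1-r) * (F (r * e') - B * (√π * (√(1-r) : ℂ)⁻¹) - (starRingEnd ℂ) B * (√π * ((1 - r * (e' * e')) ^ (1/2 : ℂ))⁻¹)) := by
      simp only [hT]
      have : (√(1-r) : ℂ) * (√(1-r) : ℂ)⁻¹ = 1 := mul_inv_cancel₀ hk0
      linear_combination (√π : ℂ) * B * this
    rw [e3, norm_mul, Complex.norm_real, Real.norm_eq_abs, abs_of_pos hk]
    exact mul_le_mul_of_nonneg_left hle hk.le
  have hk0 : Filter.Tendsto (fun r : ℝ => √(1 - r)) (nhdsWithin 1 (Set.Iio 1)) (nhds 0) := by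
    have : ContinuousAt (fun r : ℝ => √(1 - r)) 1 := by fun_prop
    have := this.tendsto.mono_left (nhdsWithin_le_nhds (s := Set.Iio 1))
    simpa using this
  have hk0' : Filter.Tendsto (fun r : ℝ => (√(1 - r) : ℂ)) (nhdsWithin 1 (Set.Iio 1)) (nhds 0) := by
    have := (Complex.continuous_ofReal.tendsto 0).comp hk0
    simpa [Function.comp_def] using this
  have hTl := hTc.tendsto.mono_left (nhdsWithin_le_nhds (s := Set.Iio 1))
  have l1 := (hL.sub_const (√π * B)).sub (hk0'.mul (hTl.const_mul (√π * (starRingEnd ℂ) B)))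
  have l2 : Filter.Tendsto (fun r : ℝ => (√(1 - r) : ℂ) * F (r * e') - √π * B - √(1-r) * (√π * (starRingEnd ℂ) B * T r))
      (nhdsWithin 1 (Set.Iio 1)) (nhds 0) := by
    refine squeeze_zero_norm' ?_ (by simpa using hk0.mul_const S)
    filter_upwards [self_mem_nhdsWithin, nhdsWithin_le_nhds (lt_mem_nhds (show (0:ℝ) < 1 by norm_num))] with r hr hr0
    exact hid r hr0 hr
  have := tendsto_nhds_unique l1 l2
  rw [zero_mul, sub_zero] at this
  exact (sub_eq_zero.1 this).symm

lemma cpow_polar {ρ φ : ℝ} (hρ : 0 < ρ) (h1 : -π < φ) (h2 : φ ≤ π) (s : ℝ) :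
    ((ρ : ℂ) * Complex.exp (φ * Complex.I)) ^ (s : ℂ) = ((ρ ^ s : ℝ) : ℂ) * Complex.exp ((φ * s : ℝ) * Complex.I) := by
  have hl : Complex.log ((ρ:ℂ) * Complex.exp (φ * Complex.I)) = (Real.log ρ : ℂ) + φ * Complex.I := by
    rw [Complex.log_ofReal_mul hρ (Complex.exp_ne_zero _), Complex.log_exp (by simpa using h1) (by simpa using h2)]
  have hne : (ρ : ℂ) * Complex.exp (φ * Complex.I) ≠ 0 :=
    mul_ne_zero (by exact_mod_cast hρ.ne') (Complex.exp_ne_zero _)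
  rw [Complex.cpow_def_of_ne_zero hne, hl, Real.rpow_def_of_pos hρ, Complex.ofReal_exp, ← Complex.exp_add]
  push_cast
  ring_nf

lemma exp_pi_half_I : Complex.exp ((π / 2 : ℝ) * Complex.I) = Complex.I := by
  have h := Complex.exp_pi_div_two_mul_I
  push_cast; exact h

lemma L_polar (α β : ℝ) {θ : ℝ} (h0 : 0 < θ) (hπ : θ < π) :
    (((1 - Complex.exp (-θ * Complex.I) * Complex.exp (-θ * Complex.I)) ^ (1/2 : ℂ))⁻¹ *
        (2 / (1 - Complex.exp (-θ * Complex.I))) ^ (α : ℂ) *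
        (2 / (1 + Complex.exp (-θ * Complex.I))) ^ (β : ℂ)) =
    (√π : ℂ) * ((mAB α β θ / 2 : ℝ) * Complex.exp ((θ * (α + β + 1) / 2 - α * π / 2 - π / 4 : ℝ) * Complex.I)) := by
  have hs : 0 < Real.sin (θ/2) := Real.sin_pos_of_pos_of_lt_pi (by linarith) (by linarith)
  have hc : 0 < Real.cos (θ/2) := Real.cos_pos_of_mem_Ioo ⟨by linarith, by linarith⟩
  have hsin : 0 < Real.sin θ := Real.sin_pos_of_pos_of_lt_pi h0 hπ
  have hsin2 : Real.sin θ = 2 * Real.sin (θ/2) * Real.cos (θ/2) := by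
    rw [← Real.sin_two_mul]; ring_nf
  set s := Real.sin (θ/2) with hs_def
  set c := Real.cos (θ/2) with hc_def
  have hsc : (s:ℂ)^2 + (c:ℂ)^2 = 1 := by
    exact_mod_cast Real.sin_sq_add_cos_sq (θ/2)
  have hI := Complex.I_sq
  have hh' : Complex.exp ((θ/2 : ℝ) * Complex.I) = c + s * Complex.I := by
    rw [Complex.exp_mul_I, hs_def, hc_def]; push_cast; rfl
  have hh : Complex.exp ((-(θ/2) : ℝ) * Complex.I) = c - s * Complex.I := by
    rw [Complex.exp_mul_I, hs_def, hc_def]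
    simp [sub_eq_add_neg]
  have he : Complex.exp (-θ * Complex.I) = (c - s * Complex.I)^2 := by
    rw [← hh, ← Complex.exp_nat_mul]; push_cast; ring_nf
  have hsC : (s:ℂ) ≠ 0 := by exact_mod_cast hs.ne'
  have hcC : (c:ℂ) ≠ 0 := by exact_mod_cast hc.ne'
  have x1 : Complex.exp ((π/2 - θ : ℝ) * Complex.I) = Complex.I * (c - s * Complex.I)^2 := by
    have : Complex.exp ((π/2 - θ : ℝ) * Complex.I) =
        Complex.exp ((π / 2 : ℝ) * Complex.I) * Complex.exp (-θ * Complex.I) := by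
      rw [← Complex.exp_add]; push_cast; ring_nf
    rw [this, exp_pi_half_I, he]
  have x2 : Complex.exp ((θ/2 - π/2 : ℝ) * Complex.I) = - Complex.I * (c + s * Complex.I) := by
    have : Complex.exp ((-(π/2) : ℝ) * Complex.I) = -Complex.I := by
      rw [Complex.ofReal_neg, neg_mul, Complex.exp_neg, exp_pi_half_I, Complex.inv_I]
    have h3 : Complex.exp ((θ/2 - π/2 : ℝ) * Complex.I) =
        Complex.exp ((-(π/2) : ℝ) * Complex.I) * Complex.exp ((θ/2 : ℝ) * Complex.I) := by
      rw [← Complex.exp_add]; push_cast; ring_nf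
    rw [h3, this, hh']
  have y1 : 1 - Complex.exp (-θ * Complex.I) * Complex.exp (-θ * Complex.I) =
      ((4 * s * c : ℝ) : ℂ) * Complex.exp ((π/2 - θ : ℝ) * Complex.I) := by
    rw [x1, he]; push_cast
    have : (c - s * Complex.I) * (c + s * Complex.I) = 1 := by linear_combination hsc - (s:ℂ)^2 * hI
    have h4 : (c + s * Complex.I)^2 - (c - s * Complex.I)^2 = 4 * s * c * Complex.I := by ring
    calc (1:ℂ) - (c - s * Complex.I)^2 * (c - s * Complex.I)^2
        = ((c - s * Complex.I) * (c + s * Complex.I))^2 - (c - s * Complex.I)^2 * (c - s * Complex.I)^2 := by rw [this]; ring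
      _ = _ := by ring
  have hpq : (c - s * Complex.I) * (c + s * Complex.I) = 1 := by linear_combination hsc - (s:ℂ)^2 * hI
  have hqp : ((c:ℂ) + s * Complex.I) - (c - s * Complex.I) = 2 * s * Complex.I := by ring
  have hqp2 : ((c:ℂ) + s * Complex.I) + (c - s * Complex.I) = 2 * c := by ring
  have y2 : 2 / (1 - Complex.exp (-θ * Complex.I)) = ((s⁻¹ : ℝ) : ℂ) * Complex.exp ((θ/2 - π/2 : ℝ) * Complex.I) := by
    rw [x2, he]
    have h : (1 - ((c:ℂ) - s * Complex.I)^2) * (- Complex.I * (c + s * Complex.I)) = 2 * s := by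
      linear_combination Complex.I * (c - s * Complex.I) * hpq - Complex.I * hqp - 2 * s * hI
    have hne : (1 - ((c:ℂ) - s * Complex.I)^2) ≠ 0 := by
      intro h0; rw [h0, zero_mul] at h; exact hsC (by simpa using h.symm)
    rw [div_eq_iff hne, Complex.ofReal_inv]
    calc (2:ℂ) = (s:ℂ)⁻¹ * (2 * s) := by field_simp
      _ = _ := by rw [← h]; ring
  have y3 : 2 / (1 + Complex.exp (-θ * Complex.I)) = ((c⁻¹ : ℝ) : ℂ) * Complex.exp ((θ/2 : ℝ) * Complex.I) := by
    rw [hh', he]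
    have h : (1 + ((c:ℂ) - s * Complex.I)^2) * (c + s * Complex.I) = 2 * c := by
      linear_combination (c - s * Complex.I) * hpq + hqp2
    have hne : (1 + ((c:ℂ) - s * Complex.I)^2) ≠ 0 := by
      intro h0; rw [h0, zero_mul] at h; exact hcC (by simpa using h.symm)
    rw [div_eq_iff hne, Complex.ofReal_inv]
    calc (2:ℂ) = (c:ℂ)⁻¹ * (2 * c) := by field_simp
      _ = _ := by rw [← h]; ring
  have z1 := cpow_polar (ρ := 4 * s * c) (φ := π/2 - θ) (by positivity) (by linarith) (by linarith) (1/2)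
  have z2 := cpow_polar (ρ := s⁻¹) (φ := θ/2 - π/2) (by positivity) (by linarith) (by linarith) α
  have z3 := cpow_polar (ρ := c⁻¹) (φ := θ/2) (by positivity) (by linarith) (by linarith) β
  have hhalf : (((1/2 : ℝ)) : ℂ) = (1/2 : ℂ) := by push_cast; rfl
  rw [hhalf] at z1
  rw [y1, y2, y3, z1, z2, z3]
  have hm : (((4 * s * c) ^ (1/2 : ℝ) : ℝ))⁻¹ * s⁻¹ ^ α * c⁻¹ ^ β = √π * (mAB α β θ / 2) := by
    rw [mAB, ← hs_def, ← hc_def, Real.rpow_neg Real.pi_pos.le, ← Real.sqrt_eq_rpow, ← Real.sqrt_eq_rpow,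
      Real.rpow_sub hs, Real.rpow_sub hc, ← Real.sqrt_eq_rpow, ← Real.sqrt_eq_rpow,
      Real.inv_rpow hs.le, Real.inv_rpow hc.le, Real.rpow_neg hs.le, Real.rpow_neg hc.le,
      Real.sqrt_mul (by positivity), Real.sqrt_mul (by norm_num),
      show √(4:ℝ) = 2 by rw [show (4:ℝ) = 2^2 by norm_num]; exact Real.sqrt_sq (by norm_num)]
    have := Real.sqrt_pos.2 Real.pi_pos
    have := Real.sqrt_pos.2 hs
    have := Real.sqrt_pos.2 hc
    have := Real.rpow_pos_of_pos hs α
    have := Real.rpow_pos_of_pos hc β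
    field_simp
  have hm' := congrArg (fun y : ℝ => (y : ℂ)) hm
  simp only [Complex.ofReal_mul, Complex.ofReal_inv] at hm'
  rw [← mul_assoc (√π : ℂ), ← hm', mul_inv, ← Complex.exp_neg]
  have hx : Complex.exp ((θ * (α + β + 1) / 2 - α * π / 2 - π / 4 : ℝ) * Complex.I) =
    Complex.exp (-(((π/2 - θ) * (1/2) : ℝ) * Complex.I)) * Complex.exp (((θ/2 - π/2) * α : ℝ) * Complex.I) *
      Complex.exp ((θ/2 * β : ℝ) * Complex.I) := by
    rw [← Complex.exp_add, ← Complex.exp_add]; push_cast; ring_nf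
  rw [hx]; ring

theorem jac_B_eq (α β : ℝ) (hα : -1 < α) (hβ : -1 < β) {θ K : ℝ} (h0 : 0 < θ) (hπ : θ < π)
    (hS : 0 < Real.sin θ) (n0 : ℕ) (B : ℂ)
    (hB : ∀ n : ℕ, n0 ≤ n → 1 ≤ n → 8*K ≤ n * Real.sin θ →
      |jacp α β (Real.cos θ) n - 2*(B * Complex.exp (n*θ*Complex.I)).re|
        ≤ 16*K/(n*Real.sin θ) * ‖B‖) :
    B = (mAB α β θ / 2 : ℝ) * Complex.exp ((θ*(α+β+1)/2 - α*π/2 - π/4 : ℝ) * Complex.I) := by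
  have h := abel_identify (P := fun n => jacobiP α β n (Real.cos θ)) (σ := (α+β+1)/2) (θ := θ)
    (M := 16*K/Real.sin θ*‖B‖) (B := B) (F := jacF α β θ)
    (n1 := max n0 ⌈8*K/Real.sin θ⌉₊) (by linarith) h0 hπ ?_
    (fun w hw => jac_gen hα hβ θ hw) (jac_lim α β h0 hπ)
  · rw [L_polar α β h0 hπ] at h
    have hp : (√π : ℂ) ≠ 0 := by
      have : √π ≠ 0 := (Real.sqrt_pos.2 Real.pi_pos).ne'
      exact_mod_cast this
    exact mul_left_cancel₀ hp h
  · intro n hn hn1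
    have h1 : n0 ≤ n := le_trans (le_max_left _ _) hn
    have h2 : ⌈8*K/Real.sin θ⌉₊ ≤ n := le_trans (le_max_right _ _) hn
    have h3 : 8*K/Real.sin θ ≤ n := Nat.ceil_le.1 h2
    rw [div_le_iff₀ hS] at h3
    have h4 := hB n h1 hn1 h3
    have hnp : (0:ℝ) < n := by exact_mod_cast hn1
    have e : 16*K/(n*Real.sin θ) * ‖B‖ = 16*K/Real.sin θ*‖B‖ / n := by
      field_simp
    rw [e] at h4
    exact h4

theorem mAB_nonneg' (α β : ℝ) {θ : ℝ} (h0 : 0 < θ) (hπ : θ < π) : 0 ≤ mAB α β θ := by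
  unfold mAB
  have h1 : 0 ≤ Real.sin (θ/2) := (Real.sin_pos_of_pos_of_lt_pi (by linarith) (by linarith)).le
  have h2 : 0 ≤ Real.cos (θ/2) :=
    (Real.cos_pos_of_mem_Ioo ⟨by linarith [Real.pi_pos], by linarith⟩).le
  have := Real.pi_pos
  positivity

theorem sin_lower {θ d : ℝ} (hd : 0 ≤ d) (h1 : d ≤ θ) (h2 : θ ≤ π - d) :
    2/π * d ≤ Real.sin θ := by
  have hp := Real.pi_pos
  rcases le_total θ (π/2) with h | h
  · have := Real.mul_le_sin (x := θ) (by linarith) h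
    have h3 : 2/π * d ≤ 2/π * θ := by gcongr
    linarith
  · have := Real.mul_le_sin (x := π - θ) (by linarith) (by linarith)
    rw [Real.sin_pi_sub] at this
    have h3 : 2/π * d ≤ 2/π * (π - θ) := by gcongr; linarith
    linarith

/-- Lemma 2.3 i): one-term asymptotics of the Jacobi polynomial.  For `α,β > −1`
there are `c, C > 0` depending only on `α,β` such that for `ℓ ≥ 1` and
`c/ℓ ≤ θ ≤ π − c/ℓ`,
`|P_ℓ^{(α,β)}(cos θ) − ℓ̃^{−1/2} m_{α,β}(θ) cos ω_α(ℓ̃θ)|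
   ≤ C ℓ̃^{−1/2} m_{α,β}(θ) (sin θ)^{−1} ℓ^{−1}`, where `ℓ̃ = ℓ + (α+β+1)/2`. -/
theorem jacobi_one_term_asymptotics (α β : ℝ) (hα : -1 < α) (hβ : -1 < β) :
    ∃ c : ℝ, 0 < c ∧ ∃ C : ℝ, 0 < C ∧
      ∀ ℓ : ℕ, 1 ≤ ℓ → ∀ θ : ℝ, c / (ℓ : ℝ) ≤ θ → θ ≤ Real.pi - c / (ℓ : ℝ) →
        |jacobiP α β ℓ (Real.cos θ) -
            ((ℓ : ℝ) + (α + β + 1) / 2) ^ (-(1 / 2 : ℝ)) * mAB α β θ *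
              Real.cos (omegaA α (((ℓ : ℝ) + (α + β + 1) / 2) * θ))| ≤
          C * ((ℓ : ℝ) + (α + β + 1) / 2) ^ (-(1 / 2 : ℝ)) * mAB α β θ *
            (Real.sin θ)⁻¹ * (ℓ : ℝ)⁻¹ := by
  obtain ⟨K, hK, n0, hrec⟩ := jacp_rec hα hβ
  have hpi := Real.pi_pos
  have hn0 : (0:ℝ) ≤ n0 := Nat.cast_nonneg _
  refine ⟨π / 2 * (8*K + n0 + 1), by positivity, 8*K, by positivity, ?_⟩
  intro ℓ hℓ θ hl hr
  have hℓp : (0:ℝ) < ℓ := by exact_mod_cast hℓ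
  have hd : 0 < π / 2 * (8*K + n0 + 1) / (ℓ:ℝ) := by positivity
  have h0 : 0 < θ := by linarith
  have hπ : θ < π := by linarith
  have hS : 0 < Real.sin θ := Real.sin_pos_of_pos_of_lt_pi h0 hπ
  have hs := sin_lower hd.le hl hr
  have e1 : 2/π * (π / 2 * (8*K + n0 + 1) / (ℓ:ℝ)) = (8*K + n0 + 1) / (ℓ:ℝ) := by
    field_simp
  rw [e1, div_le_iff₀ hℓp] at hs
  have hs1 := Real.sin_le_one θ
  have hn : n0 ≤ ℓ := by
    have : (n0:ℝ) ≤ ℓ := by nlinarith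
    exact_mod_cast this
  obtain ⟨B, hB⟩ := disc_main (jacp α β (Real.cos θ)) θ K hK.le hS n0
    (fun n hn => hrec _ (Real.abs_cos_le_one θ) n hn)
  have hBe := jac_B_eq α β hα hβ h0 hπ hS n0 B hB
  have hmain := hB ℓ hn hℓ (by linarith)
  have hm := mAB_nonneg' α β h0 hπ
  have hnorm : ‖B‖ = mAB α β θ / 2 := by
    rw [hBe, norm_mul, Complex.norm_exp_ofReal_mul_I, mul_one, Complex.norm_real,
      Real.norm_of_nonneg (by positivity)]
  have hre : 2*(B * Complex.exp (ℓ*θ*Complex.I)).re =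
      mAB α β θ * Real.cos (omegaA α (((ℓ : ℝ) + (α + β + 1) / 2) * θ)) := by
    rw [hBe, mul_assoc, ← Complex.exp_add, Complex.re_ofReal_mul]
    have : ((θ*(α+β+1)/2 - α*π/2 - π/4 : ℝ) : ℂ) * Complex.I + ℓ*θ*Complex.I =
        ((omegaA α (((ℓ : ℝ) + (α + β + 1) / 2) * θ) : ℝ) : ℂ) * Complex.I := by
      unfold omegaA
      push_cast
      ring
    rw [this, Complex.exp_ofReal_mul_I_re]
    ring
  rw [hre, hnorm] at hmain
  unfold jacp at hmain
  have hℓ1 : (1:ℝ) ≤ ℓ := by exact_mod_cast hℓ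
  have hN : 0 < (ℓ : ℝ) + (α + β + 1) / 2 := by linarith
  rw [Real.rpow_neg hN.le, ← Real.sqrt_eq_rpow]
  set N := (ℓ : ℝ) + (α + β + 1) / 2 with hNdef
  have hq : 0 < √N := Real.sqrt_pos.2 hN
  have e2 : jacobiP α β ℓ (Real.cos θ) - (√N)⁻¹ * mAB α β θ * Real.cos (omegaA α (N * θ)) =
      (√N)⁻¹ * (√N * jacobiP α β ℓ (Real.cos θ) - mAB α β θ * Real.cos (omegaA α (N * θ))) := by
    field_simp
  rw [e2, abs_mul, abs_of_pos (inv_pos.2 hq)]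
  calc _ ≤ (√N)⁻¹ * (16*K/(ℓ*Real.sin θ) * (mAB α β θ / 2)) := by gcongr
    _ = _ := by field_simp; ring
end
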